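/- Let d ≥ 4 and 1 < p < p_d = (2d−2)/(d+1). Let ℰ be a finite subset of 𝒴 × ℛ and set ℰ_k = ℰ ∩ (𝒴 × ℛ_k). Let c : ℰ → ℂ satisfy |c(y,r)| ≤ 1 for all (y,r) ∈ ℰ. Then ‖∑_{(y,r)∈ℰ} c(y,r) F_{y,r}‖_{L^p(ℝ^d)}^p ≤ C ∑_{k≥0} 2^{k(d−1)} #ℰ_k, where C depends only on p, d and ψ. -/

import Mathlib

open MeasureTheory Metric Set
open scoped FourierTransform ENNReal NNReal

noncomputable section

abbrev Ed (d : ℕ) := EuclideanSpace ℝ (Fin d)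

/-- Surface measure on the sphere of radius `r` centered at the origin in `ℝ^d`:
the `(d-1)`-dimensional Hausdorff measure restricted to the sphere. -/
def sphereM (d : ℕ) (r : ℝ) : Measure (Ed d) :=
  (μH[(d : ℝ) - 1]).restrict (Metric.sphere (0 : Ed d) r)

/-- `ψ₀` is admissible: radial, `C^∞`, supported in the ball of radius `1/10`, and
its Fourier transform vanishes to order `20d` at the origin. -/
def Admissible (d : ℕ) (ψ₀ : Ed d → ℂ) : Prop :=
  ContDiff ℝ (⊤ : ℕ∞) ψ₀ ∧
  (∀ x, ψ₀ x ≠ 0 → ‖x‖ ≤ 1 / 10) ∧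
  (∀ x y : Ed d, ‖x‖ = ‖y‖ → ψ₀ x = ψ₀ y) ∧
  (∀ n : ℕ, n < 20 * d → iteratedFDeriv ℝ n (𝓕 ψ₀) 0 = 0)

/-- `ψ = ψ₀ * ψ₀` (convolution). -/
def psiOf (d : ℕ) (ψ₀ : Ed d → ℂ) : Ed d → ℂ :=
  fun x => ∫ y, ψ₀ y * ψ₀ (x - y)

/-- `F_{y,r} = σ_r * ψ(· - y)`. -/
def Fyr (d : ℕ) (ψ₀ : Ed d → ℂ) (y : Ed d) (r : ℝ) : Ed d → ℂ :=
  fun x => ∫ z, psiOf d ψ₀ (x - y - z) ∂(sphereM d r)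

/-!
Kernels with a common radius `r` are almost orthogonal: by Plancherel their sums are controlled by
the sums of the disjointly supported translates of `ψ₀`, at the cost of
`sup |σ̂_r ψ̂₀|² ≲ r ^ (d - 1)`. For different radii, the Fourier transform of a radial function may
be averaged over a sphere, and the decay of `σ̂` then gives
`|⟨F_{y,r}, F_{y',r'}⟩| ≲ (r r' / |y - y'|) ^ ((d - 1) / 2)`. Over a family with at most `u ρ`
points `(y, r)` in each ball of radius `ρ`, these inner products at radii at least `L` apart sum to
`u L ^ (-(d - 3) / 2) ∑ r ^ (d - 1)`, while Cauchy-Schwarz inside blocks of radii of length `L`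
costs a factor `L`; taking `L = u ^ (2 / (d - 1))`, the square of the `L²` norm is at most
`u ^ (2 / (d - 1)) ∑ r ^ (d - 1)`. If moreover every point of the family lies in a ball of some
radius `ρ` with at least `u ρ` points, then a Vitali covering shows that the sum is supported on a
set of measure at most `u⁻¹ ∑ r ^ (d - 1)`. Hölder's inequality combines the two into an `L^p` bound
with factor `u ^ (1 / 2 + 1 / (d - 1) - 1 / p)`. Splitting a general family according to the dyadic
density `u` leaves a geometric series, which converges exactly when `p < (2 d - 2) / (d + 1)`.
-/

section

open Module
open scoped RealInnerProductSpace Pointwise SchwartzMap ComplexConjugate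

/-! ### Surface measure of spheres -/

section Sphere

variable {E : Type*} [NormedAddCommGroup E] [InnerProductSpace ℝ E]

lemma sphere_inter_halfSpace_subset_stereo_image {v : E} (hv : ‖v‖ = 1) :
    sphere (0 : E) 1 ∩ {x | ⟪v, x⟫ ≤ 0} ⊆
      (fun w : (ℝ ∙ v)ᗮ => stereoInvFunAux v w) '' closedBall 0 2 := by
  rintro x ⟨hx, hvx : ⟪v, x⟫ ≤ 0⟩
  have hxv : x ≠ v := by
    rintro rfl
    rw [real_inner_self_eq_norm_sq, hv] at hvx
    norm_num at hvx
  refine ⟨stereoToFun v x, ?_, congrArg Subtype.val (stereo_left_inv hv (x := ⟨x, hx⟩) hxv)⟩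
  have hproj : ‖(ℝ ∙ v)ᗮ.orthogonalProjectionOnto x‖ ≤ 1 :=
    ((ℝ ∙ v)ᗮ.norm_orthogonalProjectionOnto_apply_le x).trans (mem_sphere_zero_iff_norm.1 hx).le
  have hfactor : |2 / (1 - ⟪v, x⟫)| ≤ 2 := by
    rw [abs_of_nonneg (div_nonneg two_pos.le (by linarith))]
    exact div_le_self two_pos.le (by linarith)
  rw [mem_closedBall_zero_iff, stereoToFun_apply, norm_smul, innerSL_apply_apply, Real.norm_eq_abs]
  nlinarith [norm_nonneg ((ℝ ∙ v)ᗮ.orthogonalProjectionOnto x)]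

variable [FiniteDimensional ℝ E]

lemma finrank_orthogonal_span_singleton_eq_sub_one {v : E} (hv : ‖v‖ = 1) :
    (finrank ℝ (ℝ ∙ v)ᗮ : ℝ) = finrank ℝ E - 1 := by
  have h := (ℝ ∙ v).finrank_add_finrank_orthogonal
  rw [finrank_span_singleton (norm_ne_zero_iff.1 (by simp [hv]))] at h
  rw [← h]
  push_cast
  ring

variable [MeasurableSpace E] [BorelSpace E]

lemma hausdorffMeasure_sphere_inter_halfSpace_lt_top {v : E} (hv : ‖v‖ = 1) :
    μH[(finrank ℝ E : ℝ) - 1] (sphere (0 : E) 1 ∩ {x | ⟪v, x⟫ ≤ 0}) < ∞ := by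
  have hsmooth : ContDiff ℝ 1 fun w : (ℝ ∙ v)ᗮ => stereoInvFunAux v w :=
    contDiff_stereoInvFunAux.comp (ℝ ∙ v)ᗮ.subtypeL.contDiff
  obtain ⟨K, hK⟩ := (hsmooth.locallyLipschitz.locallyLipschitzOn
    (s := closedBall 0 2)).exists_lipschitzOnWith_of_compact (isCompact_closedBall 0 2)
  rw [← finrank_orthogonal_span_singleton_eq_sub_one hv]
  calc μH[(finrank ℝ (ℝ ∙ v)ᗮ : ℝ)] (sphere (0 : E) 1 ∩ {x | ⟪v, x⟫ ≤ 0})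
      ≤ μH[(finrank ℝ (ℝ ∙ v)ᗮ : ℝ)]
          ((fun w : (ℝ ∙ v)ᗮ => stereoInvFunAux v w) '' closedBall 0 2) :=
        measure_mono (sphere_inter_halfSpace_subset_stereo_image hv)
    _ ≤ (K : ℝ≥0∞) ^ (finrank ℝ (ℝ ∙ v)ᗮ : ℝ) * μH[(finrank ℝ (ℝ ∙ v)ᗮ : ℝ)]
          (closedBall (0 : (ℝ ∙ v)ᗮ) 2) := hK.hausdorffMeasure_image_le (Nat.cast_nonneg _)
    _ < ∞ := ENNReal.mul_lt_top (ENNReal.rpow_lt_top_of_nonneg (by positivity) (by simp))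
        measure_closedBall_lt_top

variable [Nontrivial E]

lemma hausdorffMeasure_unitSphere_lt_top : μH[(finrank ℝ E : ℝ) - 1] (sphere (0 : E) 1) < ∞ := by
  obtain ⟨v, hv⟩ := exists_norm_eq E zero_le_one
  have hcover : sphere (0 : E) 1 ⊆
      sphere (0 : E) 1 ∩ {x | ⟪v, x⟫ ≤ 0} ∪ sphere (0 : E) 1 ∩ {x | ⟪-v, x⟫ ≤ 0} := fun x hx =>
    (le_total ⟪v, x⟫ 0).imp (fun h => ⟨hx, h⟩) fun h => ⟨hx, by simpa [inner_neg_left] using h⟩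
  exact (measure_mono hcover).trans_lt <| measure_union_lt_top
    (hausdorffMeasure_sphere_inter_halfSpace_lt_top hv)
    (hausdorffMeasure_sphere_inter_halfSpace_lt_top (by rwa [norm_neg]))

lemma hausdorffMeasure_unitSphere_pos : 0 < μH[(finrank ℝ E : ℝ) - 1] (sphere (0 : E) 1) := by
  obtain ⟨v, hv⟩ := exists_norm_eq E zero_le_one
  have hball : closedBall (0 : (ℝ ∙ v)ᗮ) 1 ⊆
      (ℝ ∙ v)ᗮ.orthogonalProjectionOnto '' sphere (0 : E) 1 := by
    intro w hw
    have hw1 : ‖w‖ ^ 2 ≤ 1 := pow_le_one₀ (norm_nonneg w) (mem_closedBall_zero_iff.1 hw)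
    have hvw : ⟪(w : E), √(1 - ‖w‖ ^ 2) • v⟫ = 0 := by
      rw [inner_smul_right, Submodule.mem_orthogonal_singleton_iff_inner_left.1 w.2, mul_zero]
    refine ⟨w + √(1 - ‖w‖ ^ 2) • v, ?_, ?_⟩
    · rw [mem_sphere_zero_iff_norm, ← sq_eq_sq₀ (norm_nonneg _) zero_le_one, sq,
        norm_add_sq_eq_norm_sq_add_norm_sq_of_inner_eq_zero _ _ hvw, norm_smul, hv, mul_one,
        Real.norm_of_nonneg (Real.sqrt_nonneg _), Real.mul_self_sqrt (by linarith),
        Submodule.coe_norm]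
      ring
    · rw [map_add, map_smul,
        Submodule.orthogonalProjectionOnto_orthogonalComplement_singleton_eq_zero, smul_zero,
        add_zero, Submodule.orthogonalProjectionOnto_mem_subspace_eq_self]
  rw [← finrank_orthogonal_span_singleton_eq_sub_one hv]
  calc 0 < μH[(finrank ℝ (ℝ ∙ v)ᗮ : ℝ)] (closedBall (0 : (ℝ ∙ v)ᗮ) 1) :=
        measure_closedBall_pos _ _ one_pos
    _ ≤ μH[(finrank ℝ (ℝ ∙ v)ᗮ : ℝ)] ((ℝ ∙ v)ᗮ.orthogonalProjectionOnto '' sphere (0 : E) 1) :=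
        measure_mono hball
    _ ≤ μH[(finrank ℝ (ℝ ∙ v)ᗮ : ℝ)] (sphere (0 : E) 1) :=
        hausdorffMeasure_orthogonalProjectionOnto_le _ _ _ (Nat.cast_nonneg _)

end Sphere

section SphereM

variable {d : ℕ}

lemma sphereM_univ_lt_top [NeZero d] (r : ℝ) : sphereM d r univ < ∞ := by
  have hd : (0 : ℝ) ≤ (d : ℝ) - 1 := by
    rw [sub_nonneg, Nat.one_le_cast]; exact NeZero.one_le
  have hsub : sphere (0 : Ed d) r ⊆ (fun z => r • z) '' sphere (0 : Ed d) 1 := by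
    intro x hx
    obtain ⟨v, hv⟩ := exists_norm_eq (Ed d) zero_le_one
    have hx' : ‖x‖ = r := mem_sphere_zero_iff_norm.1 hx
    rcases eq_or_ne r 0 with rfl | hr
    · exact ⟨v, by simpa using hv, by simp [norm_eq_zero.1 hx']⟩
    · exact ⟨r⁻¹ • x, by simp [norm_smul, hx', abs_of_nonneg (hx' ▸ norm_nonneg x), hr],
        smul_inv_smul₀ hr x⟩
  rw [sphereM, Measure.restrict_apply_univ]
  refine (measure_mono hsub).trans_lt <| ((lipschitzWith_smul r).hausdorffMeasure_image_le hd
    _).trans_lt <| ENNReal.mul_lt_top (ENNReal.rpow_lt_top_of_nonneg hd ENNReal.coe_ne_top) ?_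
  simpa using hausdorffMeasure_unitSphere_lt_top (E := Ed d)

instance isFiniteMeasure_sphereM [NeZero d] (r : ℝ) : IsFiniteMeasure (sphereM d r) :=
  ⟨sphereM_univ_lt_top r⟩

lemma sphereM_one_real_univ_pos [NeZero d] : 0 < (sphereM d 1).real univ := by
  refine ENNReal.toReal_pos ?_ (measure_ne_top _ _)
  simpa [sphereM] using (hausdorffMeasure_unitSphere_pos (E := Ed d)).ne'

lemma ae_sphereM_norm_eq (r : ℝ) : ∀ᵐ z ∂(sphereM d r), ‖z‖ = r :=
  (ae_restrict_mem isClosed_sphere.measurableSet).mono fun _ hz => mem_sphere_zero_iff_norm.1 hz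

lemma measurePreserving_sphereM (r : ℝ) (A : Ed d ≃ₗᵢ[ℝ] Ed d) :
    MeasurePreserving A (sphereM d r) (sphereM d r) := by
  have hpre : A ⁻¹' sphere 0 r = sphere 0 r := by ext x; simp
  have h := (A.toIsometryEquiv.measurePreserving_hausdorffMeasure ((d : ℝ) - 1)).restrict_preimage
    (s := sphere (0 : Ed d) r) isClosed_sphere.measurableSet
  rwa [LinearIsometryEquiv.coe_toIsometryEquiv, hpre] at h

lemma sphereM_eq_smul_map [NeZero d] {r : ℝ} (hr : 0 < r) :
    sphereM d r = ENNReal.ofReal (r ^ (d - 1)) • (sphereM d 1).map (fun z => r • z) := by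
  have hd : 1 ≤ d := NeZero.one_le
  ext s hs
  have hm : Measurable fun z : Ed d => r • z := measurable_const_smul r
  have hset : s ∩ sphere 0 r = r • ((fun z : Ed d => r • z) ⁻¹' s ∩ sphere 0 1) := by
    ext x
    simp [mem_smul_set_iff_inv_smul_mem₀ hr.ne', hr.ne', norm_smul, abs_of_pos hr,
      inv_mul_eq_one₀ hr.ne', eq_comm]
  rw [Measure.smul_apply, Measure.map_apply hm hs, sphereM, sphereM, Measure.restrict_apply hs,
    Measure.restrict_apply (hm hs), smul_eq_mul, hset,
    Measure.hausdorffMeasure_smul₀ (by simpa using hd) hr.ne', ENNReal.smul_def, smul_eq_mul,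
    ← Nat.cast_pred hd, NNReal.rpow_natCast, Real.nnnorm_of_nonneg hr.le,
    ENNReal.ofReal_pow hr.le, ENNReal.ofReal, Real.toNNReal_of_nonneg hr.le, ENNReal.coe_pow]

end SphereM

/-! ### Decay of solutions of Bessel-type equations -/

section DampedOscillator

variable {a : ℝ} {g h : ℝ → ℝ}

/-- The energy of a solution of `g' = h`, `h' = -g - (a / s) h`. The cross term is chosen so that
`s ^ a * dampedEnergy a g h s` is conserved up to an integrable relative error `a / s ^ 2`. -/
def dampedEnergy (a : ℝ) (g h : ℝ → ℝ) (s : ℝ) : ℝ :=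
  g s ^ 2 + h s ^ 2 + a / s * (g s * h s)

lemma sq_add_sq_le_two_mul_dampedEnergy {s : ℝ} (ha : 0 ≤ a) (hs : 0 < s) (has : a ≤ s) :
    g s ^ 2 + h s ^ 2 ≤ 2 * dampedEnergy a g h s := by
  have h0 : 0 ≤ a / s := by positivity
  have h1 : a / s ≤ 1 := (div_le_one hs).2 has
  unfold dampedEnergy
  nlinarith [sq_nonneg (g s + h s), sq_nonneg (g s), sq_nonneg (h s),
    mul_nonneg h0 (sq_nonneg (g s + h s))]

lemma hasDerivAt_rpow_mul_dampedEnergy {s : ℝ} (hs : 0 < s) (hg : HasDerivAt g (h s) s)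
    (hh : HasDerivAt h (-g s - a / s * h s) s) :
    HasDerivAt (fun t => t ^ a * dampedEnergy a g h t)
      (-(s ^ a * (a / s ^ 2) * (g s * h s))) s := by
  have hpow := Real.hasDerivAt_rpow_const (p := a) (Or.inl hs.ne')
  have hdiv := (hasDerivAt_inv hs.ne').const_mul a
  refine (hpow.fun_mul (((hg.pow 2).add (hh.pow 2)).add (hdiv.mul (hg.mul hh)))).congr_deriv ?_
  simp only [Pi.add_apply, Pi.mul_apply, Pi.pow_apply, Real.rpow_sub_one hs.ne']
  field_simp
  ring

lemma antitoneOn_exp_mul_rpow_mul_dampedEnergy (ha : 0 ≤ a)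
    (hg : ∀ s, 0 < s → HasDerivAt g (h s) s)
    (hh : ∀ s, 0 < s → HasDerivAt h (-g s - a / s * h s) s) :
    AntitoneOn (fun s => Real.exp (a / s) * (s ^ a * dampedEnergy a g h s)) (Ici (1 + a)) := by
  have hpos : ∀ s ∈ Ici (1 + a), 0 < s := fun s hs => by have := mem_Ici.1 hs; linarith
  have hderiv : ∀ s ∈ Ici (1 + a), HasDerivAt
      (fun s => Real.exp (a / s) * (s ^ a * dampedEnergy a g h s))
      (-(Real.exp (a / s) * s ^ a * (a / s ^ 2) * (dampedEnergy a g h s + g s * h s))) s := by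
    intro s hs
    have hs0 := hpos s hs
    have hexp := ((hasDerivAt_inv hs0.ne').const_mul a).exp
    have henergy := hasDerivAt_rpow_mul_dampedEnergy hs0 (hg s hs0) (hh s hs0)
    refine (hexp.fun_mul henergy).congr_deriv ?_
    simp only [← div_eq_mul_inv]
    ring
  refine antitoneOn_of_hasDerivWithinAt_nonpos (convex_Ici _)
    (fun s hs => (hderiv s hs).continuousAt.continuousWithinAt)
    (fun s hs => (hderiv s (interior_subset hs)).hasDerivWithinAt) fun s hs => ?_
  have hs0 := hpos s (interior_subset hs)
  have henergy := sq_add_sq_le_two_mul_dampedEnergy (g := g) (h := h) ha hs0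
    (by linarith [mem_Ici.1 (interior_subset hs)])
  have : 0 ≤ dampedEnergy a g h s + g s * h s := by nlinarith [sq_nonneg (g s + h s)]
  exact neg_nonpos.2 (by positivity)

lemma exists_rpow_mul_sq_le_of_damped (ha : 0 ≤ a)
    (hg : ∀ s, 0 < s → HasDerivAt g (h s) s)
    (hh : ∀ s, 0 < s → HasDerivAt h (-g s - a / s * h s) s) :
    ∃ C, ∀ s, 1 + a ≤ s → s ^ a * g s ^ 2 ≤ C := by
  have hanti := antitoneOn_exp_mul_rpow_mul_dampedEnergy ha hg hh
  refine ⟨2 * (Real.exp (a / (1 + a)) * ((1 + a) ^ a * dampedEnergy a g h (1 + a))), fun s hs => ?_⟩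
  have hs0 : 0 < s := by linarith
  have henergy := sq_add_sq_le_two_mul_dampedEnergy (g := g) (h := h) ha hs0 (by linarith)
  have hW : 0 ≤ dampedEnergy a g h s := by nlinarith [sq_nonneg (g s), sq_nonneg (h s)]
  calc s ^ a * g s ^ 2 ≤ s ^ a * (2 * dampedEnergy a g h s) := by
        gcongr; linarith [sq_nonneg (h s)]
    _ = 2 * (1 * (s ^ a * dampedEnergy a g h s)) := by ring
    _ ≤ 2 * (Real.exp (a / s) * (s ^ a * dampedEnergy a g h s)) := by
        gcongr; exact Real.one_le_exp (by positivity)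
    _ ≤ _ := mul_le_mul_of_nonneg_left (hanti self_mem_Ici hs hs) two_pos.le

end DampedOscillator

/-! ### Fourier transform of the surface measure -/

lemma hasDerivAt_integral_of_contDiff {E : Type*} [NormedAddCommGroup E] [NormedSpace ℝ E]
    [MeasurableSpace E] [OpensMeasurableSpace E] {μ : Measure E} [IsFiniteMeasure μ] {K : Set E}
    (hK : IsCompact K) (hμ : ∀ᵐ z ∂μ, z ∈ K) {F : ℝ → E → ℝ}
    (hF : ContDiff ℝ 1 (Function.uncurry F)) (t : ℝ) :
    HasDerivAt (fun s => ∫ z, F s z ∂μ) (∫ z, deriv (F · z) t ∂μ) t := by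
  have hpartial : ∀ s z, HasDerivAt (F · z) (fderiv ℝ (Function.uncurry F) (s, z) (1, 0)) s :=
    fun s z => HasFDerivAt.comp_hasDerivAt (f := fun r => (r, z)) s
      ((hF.differentiable one_ne_zero) (s, z)).hasFDerivAt
      ((hasDerivAt_id s).prodMk (hasDerivAt_const s z))
  have hcont : Continuous fun q : ℝ × E => fderiv ℝ (Function.uncurry F) q (1, 0) :=
    (hF.continuous_fderiv one_ne_zero).clm_apply continuous_const
  have hmeas : ∀ s, AEStronglyMeasurable (F s) μ := fun s =>
    (hF.continuous.comp (Continuous.prodMk_right s)).aestronglyMeasurable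
  obtain ⟨B, hB⟩ := hK.exists_bound_of_continuousOn
    (hF.continuous.comp (Continuous.prodMk_right t)).continuousOn
  obtain ⟨C, hC⟩ := ((isCompact_closedBall t 1).prod hK).exists_bound_of_continuousOn
    hcont.continuousOn
  simp only [fun z => (hpartial t z).deriv]
  refine (hasDerivAt_integral_of_dominated_loc_of_deriv_le (bound := fun _ => C)
    (closedBall_mem_nhds t one_pos) (.of_forall hmeas)
    (.of_bound (hmeas t) B (hμ.mono fun z hz => hB z hz))
    (hcont.comp (Continuous.prodMk_right t)).aestronglyMeasurable
    (hμ.mono fun z hz s hs => hC (s, z) ⟨hs, hz⟩) (integrable_const C)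
    (.of_forall fun z s _ => hpartial s z)).2

lemma reflection_orthogonal_span_singleton_apply {E : Type*} [NormedAddCommGroup E]
    [InnerProductSpace ℝ E] {w : E} (hw : ‖w‖ = 1) (z : E) :
    (ℝ ∙ w)ᗮ.reflection z = z - (2 * ⟪w, z⟫) • w := by
  rw [Submodule.reflection_orthogonal_apply, Submodule.reflection_singleton_apply, hw]
  simp [two_smul, two_mul, add_smul]

section PlaneReflection

variable {E : Type*} [NormedAddCommGroup E] [InnerProductSpace ℝ E] {u v : E}

lemma norm_sin_smul_sub_cos_smul (hu : ‖u‖ = 1) (hv : ‖v‖ = 1) (huv : ⟪u, v⟫ = 0) (θ : ℝ) :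
    ‖Real.sin θ • u - Real.cos θ • v‖ = 1 := by
  rw [← sq_eq_sq₀ (norm_nonneg _) zero_le_one, norm_sub_sq_real, norm_smul, norm_smul, hu, hv,
    inner_smul_left, inner_smul_right, huv, Real.norm_eq_abs, Real.norm_eq_abs, mul_one, mul_one,
    sq_abs, sq_abs]
  linarith [Real.sin_sq_add_cos_sq θ]

lemma hasDerivAt_reflection_sin_smul_sub_cos_smul (u v z : E) :
    HasDerivAt (fun t : ℝ => z - (2 * ⟪Real.sin (t / 2) • u - Real.cos (t / 2) • v, z⟫) •
      (Real.sin (t / 2) • u - Real.cos (t / 2) • v)) (⟪u, z⟫ • v + ⟪v, z⟫ • u) 0 := by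
  have hhalf := (hasDerivAt_id (0 : ℝ)).div_const 2
  have hw := (hhalf.sin.smul_const u).fun_sub (hhalf.cos.smul_const v)
  have hinner := (hw.inner ℝ (hasDerivAt_const (0 : ℝ) z)).const_mul 2
  refine ((hinner.fun_smul hw).const_sub z).congr_deriv ?_
  simp only [id_eq, zero_div, Real.sin_zero, Real.cos_zero, neg_zero, zero_mul, zero_smul, one_smul,
    sub_zero, zero_sub, one_mul, inner_zero_right, zero_add, inner_smul_left, inner_neg_left,
    conj_trivial]
  module

end PlaneReflection

section SphereIntegrals

variable {d : ℕ} {r : ℝ}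

lemma integral_sphereM_comp_isometry {G : Type*} [NormedAddCommGroup G] [NormedSpace ℝ G]
    (A : Ed d ≃ₗᵢ[ℝ] Ed d) (f : Ed d → G) :
    ∫ z, f (A z) ∂(sphereM d r) = ∫ z, f z ∂(sphereM d r) :=
  (measurePreserving_sphereM r A).integral_comp A.toHomeomorph.measurableEmbedding f

variable [NeZero d]

lemma integrable_sphereM_of_continuous {f : Ed d → ℝ} (hf : Continuous f) :
    Integrable f (sphereM d r) := by
  obtain ⟨C, hC⟩ := (isCompact_sphere (0 : Ed d) r).exists_bound_of_continuousOn hf.continuousOn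
  exact .of_bound hf.aestronglyMeasurable C
    ((ae_sphereM_norm_eq r).mono fun z hz => hC z (mem_sphere_zero_iff_norm.2 hz))

lemma integral_fderiv_rotation_eq_zero {u v : Ed d} (hu : ‖u‖ = 1) (hv : ‖v‖ = 1) (huv : ⟪u, v⟫ = 0)
    {f : Ed d → ℝ} (hf : ContDiff ℝ 1 f) :
    ∫ z, fderiv ℝ f z (⟪u, z⟫ • v - ⟪v, z⟫ • u) ∂(sphereM d r) = 0 := by
  set w : ℝ → Ed d := fun t => Real.sin (t / 2) • u - Real.cos (t / 2) • v with hw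
  have hrefl : ∀ t z, (ℝ ∙ w t)ᗮ.reflection z = z - (2 * ⟪w t, z⟫) • w t := fun t z =>
    reflection_orthogonal_span_singleton_apply (norm_sin_smul_sub_cos_smul hu hv huv _) z
  have hconst : ∀ t, ∫ z, f (z - (2 * ⟪w t, z⟫) • w t) ∂(sphereM d r) = ∫ z, f z ∂(sphereM d r) :=
    fun t => by simp only [← hrefl]; exact integral_sphereM_comp_isometry _ f
  have hderiv : ∀ z, deriv (fun t => f (z - (2 * ⟪w t, z⟫) • w t)) 0 =
      fderiv ℝ f ((ℝ ∙ w 0)ᗮ.reflection z) (⟪u, (ℝ ∙ w 0)ᗮ.reflection z⟫ • v -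
        ⟪v, (ℝ ∙ w 0)ᗮ.reflection z⟫ • u) := by
    intro z
    have hcurve := hasDerivAt_reflection_sin_smul_sub_cos_smul u v z
    have hw0 : w 0 = -v := by simp [hw]
    have hu' : ⟪u, (ℝ ∙ w 0)ᗮ.reflection z⟫ = ⟪u, z⟫ := by
      rw [hrefl, hw0, inner_sub_right, inner_smul_right, inner_neg_right, huv]
      ring
    have hv' : ⟪v, (ℝ ∙ w 0)ᗮ.reflection z⟫ = -⟪v, z⟫ := by
      rw [hrefl, hw0, inner_sub_right, inner_smul_right, inner_neg_right, inner_neg_left,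
        real_inner_self_eq_norm_sq, hv]
      ring
    rw [hu', hv', neg_smul, sub_neg_eq_add, hrefl]
    exact ((hf.differentiable one_ne_zero _).hasFDerivAt.comp_hasDerivAt 0 hcurve).deriv
  have hsmooth : ContDiff ℝ 1 fun q : ℝ × Ed d => f (q.2 - (2 * ⟪w q.1, q.2⟫) • w q.1) := by
    have hw_smooth : ContDiff ℝ 1 fun q : ℝ × Ed d => w q.1 := by fun_prop
    exact hf.comp (contDiff_snd.sub
      ((contDiff_const.mul (hw_smooth.inner ℝ contDiff_snd)).smul hw_smooth))
  have hzero := (hasDerivAt_integral_of_contDiff (isCompact_sphere 0 r)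
    ((ae_sphereM_norm_eq r).mono fun z => mem_sphere_zero_iff_norm.2) hsmooth 0).unique
    ((hasDerivAt_const 0 _).congr_of_eventuallyEq (.of_forall hconst))
  rwa [funext hderiv, integral_sphereM_comp_isometry _
    fun z => fderiv ℝ f z (⟪u, z⟫ • v - ⟪v, z⟫ • u)] at hzero

lemma integral_coord_mul_sin_sphereM {j : Fin d} (hj : j ≠ 0) (s : ℝ) :
    ∫ z, z 0 * Real.sin (s * z 0) ∂(sphereM d r) =
      s * ∫ z, z j ^ 2 * Real.cos (s * z 0) ∂(sphereM d r) := by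
  have hinner : ∀ (i : Fin d) (z : Ed d), ⟪EuclideanSpace.single i (1 : ℝ), z⟫ = z i :=
    fun i z => by simp [EuclideanSpace.inner_single_left]
  have hf : ContDiff ℝ 1 fun z : Ed d => z j * Real.sin (s * z 0) := by fun_prop
  have hrot := integral_fderiv_rotation_eq_zero (r := r) (u := EuclideanSpace.single 0 (1 : ℝ))
    (v := EuclideanSpace.single j (1 : ℝ)) (by simp) (by simp) (by simp [hinner, hj.symm]) hf
  have hderiv : ∀ z v : Ed d, fderiv ℝ (fun z : Ed d => z j * Real.sin (s * z 0)) z v =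
      v j * Real.sin (s * z 0) + z j * (Real.cos (s * z 0) * (s * v 0)) := by
    intro z v
    have hproj : ∀ i, HasFDerivAt (fun z : Ed d => z i) (EuclideanSpace.proj i : Ed d →L[ℝ] ℝ) z :=
      fun i => (EuclideanSpace.proj i : Ed d →L[ℝ] ℝ).hasFDerivAt
    rw [((hproj j).fun_mul ((hproj 0).const_mul s).sin).fderiv]
    simp only [add_apply, smul_apply, PiLp.proj_apply, smul_eq_mul]
    ring
  have hintegrand : ∀ z : Ed d, fderiv ℝ (fun z : Ed d => z j * Real.sin (s * z 0)) z
      (⟪EuclideanSpace.single 0 1, z⟫ • EuclideanSpace.single j 1 -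
        ⟪EuclideanSpace.single j 1, z⟫ • EuclideanSpace.single 0 1) =
      z 0 * Real.sin (s * z 0) - s * (z j ^ 2 * Real.cos (s * z 0)) := by
    intro z
    rw [hderiv, hinner, hinner]
    simp only [PiLp.sub_apply, PiLp.smul_apply, PiLp.single_eq_same, smul_eq_mul, mul_one, ne_eq,
      hj, not_false_eq_true, PiLp.single_eq_of_ne, mul_zero, sub_zero, hj.symm, zero_sub, mul_neg]
    ring
  rw [funext hintegrand, integral_sub (integrable_sphereM_of_continuous (by fun_prop))
    (integrable_sphereM_of_continuous (by fun_prop)), integral_const_mul] at hrot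
  exact sub_eq_zero.1 hrot

/-- The profile `s ↦ ∫ cos (s z₀) dσ₁(z)` of the Fourier transform of the unit sphere; up to a
constant it is `s ^ (1 - d / 2) J_{d / 2 - 1}(s)`. -/
def sphereCosine (d : ℕ) [NeZero d] (s : ℝ) : ℝ := ∫ z, Real.cos (s * z 0) ∂(sphereM d 1)

lemma hasDerivAt_sphereCosine (s : ℝ) :
    HasDerivAt (sphereCosine d) (-∫ z, z 0 * Real.sin (s * z 0) ∂(sphereM d 1)) s := by
  have h := hasDerivAt_integral_of_contDiff (isCompact_sphere 0 1)
    ((ae_sphereM_norm_eq (d := d) 1).mono fun z => mem_sphere_zero_iff_norm.2)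
    (F := fun t z => Real.cos (t * z 0)) (by unfold Function.uncurry; fun_prop) s
  have hderiv : ∀ z : Ed d, deriv (fun t => Real.cos (t * z 0)) s = -(z 0 * Real.sin (s * z 0)) :=
    fun z => by simp [mul_comm]
  rwa [funext hderiv, integral_neg] at h

lemma sum_integral_sq_mul_cos_sphereM (s : ℝ) :
    ∑ j, ∫ z, z j ^ 2 * Real.cos (s * z 0) ∂(sphereM d 1) = sphereCosine d s := by
  rw [← integral_finsetSum _ fun j _ => integrable_sphereM_of_continuous (by fun_prop)]
  refine integral_congr_ae ((ae_sphereM_norm_eq 1).mono fun z hz => ?_)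
  simp only
  rw [← Finset.sum_mul, ← EuclideanSpace.real_norm_sq_eq, hz, one_pow, one_mul]

lemma hasDerivAt_integral_coord_mul_sin {s : ℝ} (hs : 0 < s) :
    HasDerivAt (fun t => -∫ z, z 0 * Real.sin (t * z 0) ∂(sphereM d 1))
      (-sphereCosine d s - (d - 1) / s * -∫ z, z 0 * Real.sin (s * z 0) ∂(sphereM d 1)) s := by
  have h := (hasDerivAt_integral_of_contDiff (isCompact_sphere 0 1)
    ((ae_sphereM_norm_eq (d := d) 1).mono fun z => mem_sphere_zero_iff_norm.2)
    (F := fun t z => z 0 * Real.sin (t * z 0)) (by unfold Function.uncurry; fun_prop) s).neg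
  have hderiv : ∀ z : Ed d, deriv (fun t => z 0 * Real.sin (t * z 0)) s =
      z 0 ^ 2 * Real.cos (s * z 0) := fun z => by
    rw [(((hasDerivAt_id' s).mul_const (z 0)).sin.const_mul (z 0)).deriv]
    ring
  refine h.congr_deriv ?_
  have hsum : ∑ j ∈ Finset.univ.erase (0 : Fin d),
      s * ∫ z, z j ^ 2 * Real.cos (s * z 0) ∂(sphereM d 1) =
      (d - 1) * ∫ z, z 0 * Real.sin (s * z 0) ∂(sphereM d 1) := by
    rw [Finset.sum_congr rfl fun j hj =>
      (integral_coord_mul_sin_sphereM (Finset.ne_of_mem_erase hj) s).symm, Finset.sum_const,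
      Finset.card_erase_of_mem (Finset.mem_univ _), Finset.card_univ, Fintype.card_fin,
      nsmul_eq_mul, Nat.cast_pred (NeZero.pos d)]
  rw [← Finset.mul_sum] at hsum
  have htotal := Finset.add_sum_erase Finset.univ
    (fun j => ∫ z, z j ^ 2 * Real.cos (s * z 0) ∂(sphereM d 1)) (Finset.mem_univ (0 : Fin d))
  rw [sum_integral_sq_mul_cos_sphereM] at htotal
  rw [funext hderiv, mul_neg, div_mul_eq_mul_div, ← hsum, mul_div_cancel_left₀ _ hs.ne']
  linear_combination -htotal

lemma abs_sphereCosine_le (s : ℝ) : |sphereCosine d s| ≤ (sphereM d 1).real univ := by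
  simpa [sphereCosine] using norm_integral_le_of_norm_le_const (μ := sphereM d 1)
    (f := fun z => Real.cos (s * z 0)) (.of_forall fun z => Real.abs_cos_le_one _)

lemma exists_abs_sphereCosine_mul_rpow_le (d : ℕ) [NeZero d] :
    ∃ C, ∀ s, 0 ≤ s → |sphereCosine d s| * s ^ (((d : ℝ) - 1) / 2) ≤ C := by
  have hd : (0 : ℝ) ≤ (d : ℝ) - 1 := sub_nonneg.2 (by exact_mod_cast NeZero.one_le)
  obtain ⟨C, hC⟩ := exists_rpow_mul_sq_le_of_damped hd
    (fun s _ => hasDerivAt_sphereCosine (d := d) s) fun s => hasDerivAt_integral_coord_mul_sin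
  refine ⟨max √C ((sphereM d 1).real univ * d ^ (((d : ℝ) - 1) / 2)), fun s hs => ?_⟩
  rcases le_total (d : ℝ) s with hds | hds
  · refine le_max_of_le_left (Real.le_sqrt_of_sq_le ?_)
    rw [mul_pow, sq_abs, mul_comm, ← Real.rpow_natCast, ← Real.rpow_mul hs]
    simpa using hC s (by simpa using hds)
  · refine le_max_of_le_right ?_
    gcongr
    exact abs_sphereCosine_le s

end SphereIntegrals

lemma fourier_integral_comp_sub {V : Type*} [NormedAddCommGroup V] [InnerProductSpace ℝ V]
    [FiniteDimensional ℝ V] [MeasurableSpace V] [BorelSpace V] (μ : Measure V) [IsFiniteMeasure μ]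
    {f : V → ℂ} (hf : Integrable f) (ξ : V) :
    𝓕 (fun x => ∫ z, f (x - z) ∂μ) ξ = charFun μ (-(2 * Real.pi) • ξ) * 𝓕 f ξ := by
  have hint : Integrable (fun q : V × V => 𝐞 (-⟪q.1, ξ⟫) • f (q.1 - q.2)) (volume.prod μ) := by
    have hconv := (integrable_const (1 : ℂ) (μ := μ)).convolution_integrand
      (ContinuousLinearMap.mul ℝ ℂ) hf
    refine ((hconv.congr (.of_forall fun q => ?_)).bdd_mul (c := 1)
      (f := fun q : V × V => (𝐞 (-⟪q.1, ξ⟫) : ℂ)) (by fun_prop)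
      (.of_forall fun q => (Circle.norm_coe _).le) : _)
    simp
  have htranslate : ∀ z, ∫ x, 𝐞 (-⟪x, ξ⟫) • f (x - z) = (𝐞 (-⟪z, ξ⟫) : ℂ) * 𝓕 f ξ := by
    intro z
    have h := congrFun (VectorFourier.fourierIntegral_comp_add_right 𝐞 volume (innerₗ V) f (-z)) ξ
    simpa [sub_eq_add_neg, VectorFourier.fourierIntegral, Circle.smul_def, Real.fourier_eq] using h
  calc 𝓕 (fun x => ∫ z, f (x - z) ∂μ) ξ
      = ∫ x, ∫ z, 𝐞 (-⟪x, ξ⟫) • f (x - z) ∂μ := by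
        simp only [Real.fourier_eq, Circle.smul_def, integral_smul]
    _ = ∫ z, (𝐞 (-⟪z, ξ⟫) : ℂ) * 𝓕 f ξ ∂μ := by
        rw [integral_integral_swap hint]
        simp only [htranslate]
    _ = charFun μ (-(2 * Real.pi) • ξ) * 𝓕 f ξ := by
        rw [integral_mul_const, charFun_apply]
        simp [Real.fourierChar_apply, inner_smul_right]

lemma fourier_compSubConstCLM {V : Type*} [NormedAddCommGroup V] [InnerProductSpace ℝ V]
    [FiniteDimensional ℝ V] [MeasurableSpace V] [BorelSpace V] (f : 𝓢(V, ℂ)) (a ξ : V) :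
    𝓕 (f.compSubConstCLM ℂ a) ξ = 𝐞 (-⟪a, ξ⟫) * 𝓕 f ξ := by
  have h := congrFun (VectorFourier.fourierIntegral_comp_add_right 𝐞 volume (innerₗ V) f (-a)) ξ
  simpa [sub_eq_add_neg, VectorFourier.fourierIntegral, Circle.smul_def, Real.fourier_eq,
    SchwartzMap.fourier_coe, Function.comp_def] using h

lemma fourier_eq_of_norm_eq {V : Type*} [NormedAddCommGroup V] [InnerProductSpace ℝ V]
    [FiniteDimensional ℝ V] [MeasurableSpace V] [BorelSpace V] {f : V → ℂ}
    (hf : ∀ x y, ‖x‖ = ‖y‖ → f x = f y) {ξ η : V} (h : ‖ξ‖ = ‖η‖) : 𝓕 f ξ = 𝓕 f η := by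
  rw [← Submodule.reflection_sub h, ← Real.fourier_comp_linearIsometry]
  exact congrArg (fun g : V → ℂ => 𝓕 g ξ)
    (funext fun x => hf _ _ (LinearIsometryEquiv.norm_map _ x).symm)

section SphereFourier

variable {d : ℕ}

/-- The Fourier transform `ξ ↦ ∫ exp (-2πi⟪z, ξ⟫) dσ_r(z)` of the surface measure `σ_r`; the scaling
matches the normalisation of `𝓕`. -/
def sphereFourier (d : ℕ) (r : ℝ) (ξ : Ed d) : ℂ := charFun (sphereM d r) (-(2 * Real.pi) • ξ)

lemma charFun_sphereM_eq_of_norm_eq {r : ℝ} {ξ η : Ed d} (h : ‖ξ‖ = ‖η‖) :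
    charFun (sphereM d r) ξ = charFun (sphereM d r) η := by
  obtain ⟨A, rfl⟩ : ∃ A : Ed d ≃ₗᵢ[ℝ] Ed d, A ξ = η := ⟨_, Submodule.reflection_sub h⟩
  rw [charFun_apply, charFun_apply,
    ← integral_sphereM_comp_isometry A fun z => Complex.exp (⟪z, A ξ⟫ * Complex.I)]
  simp only [LinearIsometryEquiv.inner_map_map]

lemma sphereFourier_eq_of_norm_eq {r : ℝ} {ξ η : Ed d} (h : ‖ξ‖ = ‖η‖) :
    sphereFourier d r ξ = sphereFourier d r η :=
  charFun_sphereM_eq_of_norm_eq (by rw [norm_smul, norm_smul, h])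

/-- Averaging over the sphere through `w` moves the oscillation of `𝓕 f w` onto the surface
measure. -/
lemma sphereM_real_univ_mul_fourier [NeZero d] {f : Ed d → ℂ} (hf : Integrable f)
    (hrad : ∀ x y, ‖x‖ = ‖y‖ → f x = f y) (w : Ed d) :
    ((sphereM d ‖w‖).real univ : ℂ) * 𝓕 f w = ∫ x, f x * sphereFourier d ‖w‖ x := by
  have hswap := VectorFourier.integral_fourierIntegral_smul_eq_flip (e := 𝐞) (L := innerₗ (Ed d))
    (ν := sphereM d ‖w‖) (f := f) (g := fun _ => (1 : ℂ)) Real.continuous_fourierChar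
    (by simp only [innerₗ_apply_apply]; fun_prop) hf (integrable_const _)
  have hleft : ∫ ξ, VectorFourier.fourierIntegral 𝐞 volume (innerₗ (Ed d)) f ξ • (1 : ℂ)
      ∂(sphereM d ‖w‖) = ((sphereM d ‖w‖).real univ : ℂ) * 𝓕 f w := by
    rw [integral_congr_ae (g := fun _ => 𝓕 f w)
      ((ae_sphereM_norm_eq ‖w‖).mono fun z hz => ?_), integral_const, Complex.real_smul]
    rw [smul_eq_mul, mul_one]
    exact fourier_eq_of_norm_eq hrad hz
  rw [← hleft, hswap]
  refine integral_congr_ae (.of_forall fun x => ?_)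
  simp [sphereFourier, VectorFourier.fourierIntegral, charFun_apply, Circle.smul_def,
    Real.fourierChar_apply, inner_smul_right, real_inner_comm]

variable [NeZero d] {r : ℝ}

lemma sphereM_real_univ (hr : 0 < r) :
    (sphereM d r).real univ = r ^ (d - 1) * (sphereM d 1).real univ := by
  rw [sphereM_eq_smul_map hr, measureReal_ennreal_smul_apply,
    map_measureReal_apply (by fun_prop) .univ, preimage_univ, ENNReal.toReal_ofReal (by positivity)]

lemma charFun_sphereM_one (ξ : Ed d) : charFun (sphereM d 1) ξ = sphereCosine d ‖ξ‖ := by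
  have hrefl : charFun (sphereM d 1) ξ = charFun (sphereM d 1) (EuclideanSpace.single 0 ‖ξ‖) :=
    charFun_sphereM_eq_of_norm_eq (by simp)
  have hodd : ∫ z : Ed d, Real.sin (‖ξ‖ * z 0) ∂(sphereM d 1) = 0 := by
    have h := integral_sphereM_comp_isometry (d := d) (r := 1) (LinearIsometryEquiv.neg ℝ)
      fun z => Real.sin (‖ξ‖ * z 0)
    simp only [LinearIsometryEquiv.coe_neg, PiLp.neg_apply, mul_neg, Real.sin_neg,
      integral_neg] at h
    linarith
  have hcos : Integrable (fun z : Ed d => Real.cos (‖ξ‖ * z 0)) (sphereM d 1) :=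
    integrable_sphereM_of_continuous (by fun_prop)
  have hsin : Integrable (fun z : Ed d => Real.sin (‖ξ‖ * z 0)) (sphereM d 1) :=
    integrable_sphereM_of_continuous (by fun_prop)
  calc charFun (sphereM d 1) ξ
      = ∫ z, ((Real.cos (‖ξ‖ * z 0) : ℂ) + Real.sin (‖ξ‖ * z 0) * Complex.I) ∂(sphereM d 1) := by
        rw [hrefl, charFun_apply]
        simp [EuclideanSpace.inner_single_right, Complex.exp_mul_I]
    _ = sphereCosine d ‖ξ‖ := by
        rw [integral_add hcos.ofReal (hsin.ofReal.mul_const _), integral_mul_const,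
          integral_complex_ofReal, integral_complex_ofReal, hodd, sphereCosine]
        simp

lemma sphereFourier_eq (hr : 0 < r) (ξ : Ed d) :
    sphereFourier d r ξ = (r ^ (d - 1) * sphereCosine d (2 * Real.pi * r * ‖ξ‖) : ℝ) := by
  have hsmul : charFun ((sphereM d 1).map (r • ·)) (-(2 * Real.pi) • ξ) =
      sphereCosine d (2 * Real.pi * r * ‖ξ‖) := by
    rw [charFun_map_smul, charFun_sphereM_one, norm_smul, norm_smul]
    simp only [norm_neg, Real.norm_eq_abs, abs_of_pos hr, abs_of_pos Real.two_pi_pos]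
    ring_nf
  rw [charFun_apply] at hsmul
  rw [sphereFourier, sphereM_eq_smul_map hr, charFun_apply, integral_smul_measure, hsmul,
    ENNReal.toReal_ofReal (by positivity), Complex.real_smul, Complex.ofReal_mul]

lemma pow_pred_eq_rpow_mul_rpow (d : ℕ) [NeZero d] (hr : 0 ≤ r) :
    r ^ (d - 1) = r ^ (((d : ℝ) - 1) / 2) * r ^ (((d : ℝ) - 1) / 2) := by
  have hd : (0 : ℝ) ≤ ((d : ℝ) - 1) / 2 := by
    have : (1 : ℝ) ≤ d := by exact_mod_cast NeZero.one_le
    linarith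
  rw [← Real.rpow_add_of_nonneg hr hd hd, add_halves, ← Real.rpow_natCast,
    Nat.cast_pred (NeZero.pos d)]

lemma exists_norm_sphereFourier_mul_rpow_le (d : ℕ) [NeZero d] :
    ∃ C, 0 ≤ C ∧ ∀ r, 0 < r → ∀ ξ : Ed d, ‖sphereFourier d r ξ‖ * ‖ξ‖ ^ (((d : ℝ) - 1) / 2) ≤
      C * r ^ (((d : ℝ) - 1) / 2) := by
  obtain ⟨C, hC⟩ := exists_abs_sphereCosine_mul_rpow_le d
  have hC₀ : 0 ≤ C := (by positivity : (0 : ℝ) ≤ _).trans (hC 1 zero_le_one)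
  set a : ℝ := ((d : ℝ) - 1) / 2
  refine ⟨C / (2 * Real.pi) ^ a, by positivity, fun r hr ξ => ?_⟩
  have hpi : 0 < (2 * Real.pi) ^ a := by positivity
  rw [sphereFourier_eq hr, Complex.norm_real, norm_mul, Real.norm_eq_abs, Real.norm_eq_abs,
    abs_of_pos (by positivity), pow_pred_eq_rpow_mul_rpow d hr.le, div_mul_eq_mul_div,
    le_div_iff₀ hpi]
  calc r ^ a * r ^ a * |sphereCosine d (2 * Real.pi * r * ‖ξ‖)| * ‖ξ‖ ^ a * (2 * Real.pi) ^ a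
      = |sphereCosine d (2 * Real.pi * r * ‖ξ‖)| * (2 * Real.pi * r * ‖ξ‖) ^ a * r ^ a := by
        rw [Real.mul_rpow (by positivity) (norm_nonneg ξ), Real.mul_rpow (by positivity) hr.le]
        ring
    _ ≤ C * r ^ a := by gcongr; exact hC _ (by positivity)

end SphereFourier

/-! ### The kernels and their inner products -/

lemma exists_norm_le_mul_pow_of_iteratedFDeriv_eq_zero.{u} {V F : Type u}
    [NormedAddCommGroup V] [NormedSpace ℝ V] [ProperSpace V] [NormedAddCommGroup F]
    [NormedSpace ℝ F] (N : ℕ) {f : V → F} (hf : ContDiff ℝ N f)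
    (hzero : ∀ n < N, iteratedFDeriv ℝ n f 0 = 0) :
    ∃ C, 0 ≤ C ∧ ∀ x, ‖x‖ ≤ 1 → ‖f x‖ ≤ C * ‖x‖ ^ N := by
  induction N generalizing F with
  | zero =>
    obtain ⟨C, hC⟩ := (isCompact_closedBall (0 : V) 1).exists_bound_of_continuousOn
      hf.continuous.continuousOn
    refine ⟨C, (norm_nonneg _).trans (hC 0 (by simp)), fun x hx => ?_⟩
    simpa using hC x (by simpa using hx)
  | succ N ih =>
    obtain ⟨C, hC₀, hC⟩ := ih (hf.fderiv_right (m := N) (by norm_cast)) fun n hn => by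
      rw [← norm_eq_zero, norm_iteratedFDeriv_fderiv, hzero (n + 1) (by lia), norm_zero]
    refine ⟨C, hC₀, fun x hx => ?_⟩
    have hf₀ : f 0 = 0 := by simpa using congrArg (· ![]) (hzero 0 N.succ_pos)
    have hmvt := (convex_closedBall (0 : V) ‖x‖).norm_image_sub_le_of_norm_fderiv_le
      (𝕜 := ℝ) (f := f) (C := C * ‖x‖ ^ N) (fun y _ => hf.differentiable (by simp) y)
      (fun y hy => by
        have hyx : ‖y‖ ≤ ‖x‖ := by simpa using hy
        exact (hC y (hyx.trans hx)).trans (by gcongr)) (x := 0) (y := x) (by simp) (by simp)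
    rwa [hf₀, sub_zero, sub_zero, mul_assoc, ← pow_succ] at hmvt

namespace Admissible

variable {d : ℕ} {ψ₀ : Ed d → ℂ} (hψ : Admissible d ψ₀)
include hψ

lemma hasCompactSupport : HasCompactSupport ψ₀ :=
  .of_support_subset_isCompact (isCompact_closedBall 0 (1 / 10)) fun x hx => by
    simpa using hψ.2.1 x hx

/-- `ψ₀` as a Schwartz function. -/
def toSchwartzMap : 𝓢(Ed d, ℂ) := hψ.hasCompactSupport.toSchwartzMap hψ.1

lemma coe_toSchwartzMap : ⇑hψ.toSchwartzMap = ψ₀ := rfl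

lemma psiOf_eq_convolution :
    psiOf d ψ₀ =
      convolution hψ.toSchwartzMap hψ.toSchwartzMap (ContinuousLinearMap.mul ℝ ℂ) volume :=
  rfl

lemma contDiff_psiOf : ContDiff ℝ (⊤ : ℕ∞) (psiOf d ψ₀) :=
  hψ.psiOf_eq_convolution ▸ hψ.hasCompactSupport.contDiff_convolution_right _
    hψ.toSchwartzMap.integrable.locallyIntegrable hψ.1

lemma norm_le_of_psiOf_ne_zero {x : Ed d} (hx : psiOf d ψ₀ x ≠ 0) : ‖x‖ ≤ 1 / 5 := by
  obtain ⟨y, hy⟩ := exists_ne_zero_of_integral_ne_zero hx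
  have hy₁ := hψ.2.1 y (left_ne_zero_of_mul hy)
  have hy₂ := hψ.2.1 (x - y) (right_ne_zero_of_mul hy)
  have htri := norm_add_le y (x - y)
  rw [add_sub_cancel] at htri
  linarith

lemma hasCompactSupport_psiOf : HasCompactSupport (psiOf d ψ₀) :=
  .of_support_subset_isCompact (isCompact_closedBall 0 (1 / 5)) fun x hx => by
    simpa using hψ.norm_le_of_psiOf_ne_zero hx

lemma fourier_psiOf (ξ : Ed d) : 𝓕 (psiOf d ψ₀) ξ = 𝓕 ψ₀ ξ ^ 2 := by
  have h :=
    Real.fourier_mul_convolution_eq hψ.toSchwartzMap.integrable hψ.toSchwartzMap.integrable ξ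
  rw [sq]
  exact h

lemma abs_norm_sub_sub_le_of_Fyr_ne_zero {x y : Ed d} {r : ℝ} (hx : Fyr d ψ₀ y r x ≠ 0) :
    |‖x - y‖ - r| ≤ 1 / 5 := by
  contrapose! hx
  refine integral_eq_zero_of_ae ((ae_sphereM_norm_eq r).mono fun z hz => ?_)
  by_contra hne
  have := (abs_norm_sub_norm_le _ _).trans (hψ.norm_le_of_psiOf_ne_zero hne)
  rw [hz] at this
  linarith

lemma hasCompactSupport_Fyr (y : Ed d) (r : ℝ) : HasCompactSupport (Fyr d ψ₀ y r) :=
  .of_support_subset_isCompact (isCompact_closedBall y (r + 1 / 5)) fun x hx => by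
    rw [mem_closedBall, dist_eq_norm]
    linarith [abs_le.1 (hψ.abs_norm_sub_sub_le_of_Fyr_ne_zero hx)]

variable [NeZero d]

lemma contDiff_Fyr (y : Ed d) (r : ℝ) : ContDiff ℝ (⊤ : ℕ∞) (Fyr d ψ₀ y r) := by
  have hconv := hψ.hasCompactSupport_psiOf.contDiff_convolution_right (μ := sphereM d r)
    (f := fun _ => (1 : ℂ)) (ContinuousLinearMap.mul ℝ ℂ) (integrable_const _).locallyIntegrable
    hψ.contDiff_psiOf
  have hFyr : Fyr d ψ₀ y r = convolution (fun _ => (1 : ℂ)) (psiOf d ψ₀)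
      (ContinuousLinearMap.mul ℝ ℂ) (sphereM d r) ∘ fun x => x - y := by
    ext x
    simp [convolution, Fyr]
  exact hFyr ▸ hconv.comp (contDiff_id.sub contDiff_const)

/-- `F_{y,r}` as a Schwartz function, for `e = (y, r)`. -/
def kernel (e : Ed d × ℝ) : 𝓢(Ed d, ℂ) :=
  (hψ.hasCompactSupport_Fyr e.1 e.2).toSchwartzMap (hψ.contDiff_Fyr e.1 e.2)

lemma coe_kernel (e : Ed d × ℝ) : ⇑(hψ.kernel e) = Fyr d ψ₀ e.1 e.2 := rfl

lemma kernel_eq_compSubConstCLM (y : Ed d) (r : ℝ) :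
    hψ.kernel (y, r) = (hψ.kernel (0, r)).compSubConstCLM ℂ y := by
  ext x
  simp [coe_kernel, Fyr]

lemma fourier_kernel (e : Ed d × ℝ) (ξ : Ed d) :
    𝓕 (hψ.kernel e) ξ = 𝐞 (-⟪e.1, ξ⟫) * (sphereFourier d e.2 ξ * 𝓕 ψ₀ ξ ^ 2) := by
  have hcenter : 𝓕 (hψ.kernel (0, e.2)) ξ = sphereFourier d e.2 ξ * 𝓕 (psiOf d ψ₀) ξ := by
    have hFyr : Fyr d ψ₀ 0 e.2 = fun x => ∫ z, psiOf d ψ₀ (x - z) ∂(sphereM d e.2) := by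
      simp [funext_iff, Fyr]
    rw [SchwartzMap.fourier_coe, coe_kernel, hFyr]
    exact fourier_integral_comp_sub (sphereM d e.2)
      (hψ.contDiff_psiOf.continuous.integrable_of_hasCompactSupport hψ.hasCompactSupport_psiOf) ξ
  rw [← hψ.fourier_psiOf, ← hcenter, ← fourier_compSubConstCLM, ← kernel_eq_compSubConstCLM]

lemma exists_norm_fourier_le_mul_rpow : ∃ C, ∀ ξ, ‖𝓕 ψ₀ ξ‖ ≤ C * ‖ξ‖ ^ (((d : ℝ) - 1) / 2) := by
  have hd : (1 : ℝ) ≤ d := by exact_mod_cast NeZero.one_le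
  have hsmooth := (𝓕 hψ.toSchwartzMap).smooth d
  rw [SchwartzMap.fourier_coe, coe_toSchwartzMap] at hsmooth
  obtain ⟨C, hC₀, hC⟩ := exists_norm_le_mul_pow_of_iteratedFDeriv_eq_zero d hsmooth
    fun n hn => hψ.2.2.2 n (by lia)
  refine ⟨max C (∫ x, ‖ψ₀ x‖), fun ξ => ?_⟩
  rcases le_total ‖ξ‖ 1 with hξ | hξ
  · calc ‖𝓕 ψ₀ ξ‖ ≤ C * ‖ξ‖ ^ (d : ℝ) := by simpa using hC ξ hξ
      _ ≤ max C (∫ x, ‖ψ₀ x‖) * ‖ξ‖ ^ (((d : ℝ) - 1) / 2) :=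
        mul_le_mul (le_max_left _ _) (Real.rpow_le_rpow_of_exponent_ge' (norm_nonneg ξ) hξ
          (by linarith) (by linarith)) (by positivity) (le_max_of_le_left hC₀)
  · calc ‖𝓕 ψ₀ ξ‖ ≤ (∫ x, ‖ψ₀ x‖) * 1 := by
          rw [mul_one]
          exact VectorFourier.norm_fourierIntegral_le_integral_norm _ _ _ _ _
      _ ≤ max C (∫ x, ‖ψ₀ x‖) * ‖ξ‖ ^ (((d : ℝ) - 1) / 2) :=
        mul_le_mul (le_max_right _ _) (Real.one_le_rpow hξ (by linarith)) zero_le_one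
          (le_max_of_le_left hC₀)

lemma exists_norm_sphereFourier_mul_norm_fourier_le :
    ∃ C, 0 < C ∧ ∀ r, 0 < r → ∀ ξ,
      ‖sphereFourier d r ξ‖ * ‖𝓕 ψ₀ ξ‖ ≤ C * r ^ (((d : ℝ) - 1) / 2) := by
  obtain ⟨C₁, hC₁, hσ⟩ := exists_norm_sphereFourier_mul_rpow_le d
  obtain ⟨C₂, hψ_le⟩ := hψ.exists_norm_fourier_le_mul_rpow
  set a : ℝ := ((d : ℝ) - 1) / 2
  refine ⟨C₁ * |C₂| + 1, by positivity, fun r hr ξ => ?_⟩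
  calc ‖sphereFourier d r ξ‖ * ‖𝓕 ψ₀ ξ‖
      ≤ ‖sphereFourier d r ξ‖ * (|C₂| * ‖ξ‖ ^ a) := by
        gcongr
        exact (hψ_le ξ).trans (by gcongr; exact le_abs_self C₂)
    _ = ‖sphereFourier d r ξ‖ * ‖ξ‖ ^ a * |C₂| := by ring
    _ ≤ C₁ * r ^ a * |C₂| := mul_le_mul_of_nonneg_right (hσ r hr ξ) (abs_nonneg _)
    _ ≤ (C₁ * |C₂| + 1) * r ^ a := by linarith [Real.rpow_nonneg hr.le a]

end Admissible

section SchwartzL2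

variable {V : Type*} [NormedAddCommGroup V] [InnerProductSpace ℝ V] [FiniteDimensional ℝ V]
  [MeasurableSpace V] [BorelSpace V]

lemma norm_toLp_two_sq (f : 𝓢(V, ℂ)) : ‖f.toLp 2‖ ^ 2 = ∫ x, ‖f x‖ ^ 2 := by
  rw [SchwartzMap.norm_toLp' (by norm_num) (by norm_num), ← Real.rpow_natCast,
    ← Real.rpow_mul (by positivity)]
  simp

lemma norm_toLp_two_le_of_norm_fourier_le {f g : 𝓢(V, ℂ)} {K : ℝ} (h : ∀ ξ, ‖𝓕 f ξ‖ ≤ K * ‖𝓕 g ξ‖) :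
    ‖f.toLp 2‖ ≤ K * ‖g.toLp 2‖ := by
  have hplancherel : ∀ φ : 𝓢(V, ℂ), ‖φ.toLp 2‖ = ‖(𝓕 φ).toLp 2‖ := fun φ => by
    rw [← SchwartzMap.toLp_fourier_eq, Lp.norm_fourier_eq]
  rw [hplancherel f, hplancherel g]
  refine Lp.norm_le_mul_norm_of_ae_le_mul ?_
  filter_upwards [(𝓕 f).coeFn_toLp 2, (𝓕 g).coeFn_toLp 2] with ξ hf hg
  rw [hf, hg]
  exact h ξ

lemma norm_sum_mul_comp_sub_sq_le {V : Type*} [NormedAddCommGroup V] {f : V → ℂ} {δ : ℝ}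
    (hf : ∀ x, f x ≠ 0 → ‖x‖ < δ / 2) {S : Finset V}
    (hS : (S : Set V).Pairwise fun y y' => δ ≤ dist y y') {c : V → ℂ} (hc : ∀ y ∈ S, ‖c y‖ ≤ 1)
    (x : V) : ‖∑ y ∈ S, c y * f (x - y)‖ ^ 2 ≤ ∑ y ∈ S, ‖f (x - y)‖ ^ 2 := by
  by_cases hx : ∃ y ∈ S, f (x - y) ≠ 0
  · obtain ⟨y, hy, hne⟩ := hx
    have hzero : ∀ y' ∈ S, y' ≠ y → c y' * f (x - y') = 0 := by
      intro y' hy' hyy'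
      by_contra hne'
      have hnear := hf _ (right_ne_zero_of_mul hne')
      have hnear' := hf _ hne
      have htri := dist_triangle_left y' y x
      rw [dist_eq_norm x, dist_eq_norm x] at htri
      linarith [hS hy' hy hyy']
    rw [Finset.sum_eq_single_of_mem y hy hzero, norm_mul]
    calc (‖c y‖ * ‖f (x - y)‖) ^ 2 ≤ ‖f (x - y)‖ ^ 2 := by
          gcongr
          exact mul_le_of_le_one_left (norm_nonneg _) (hc y hy)
      _ ≤ _ := Finset.single_le_sum (f := fun y => ‖f (x - y)‖ ^ 2) (fun _ _ => by positivity) hy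
  · push Not at hx
    rw [Finset.sum_eq_zero fun y hy => by rw [hx y hy, mul_zero]]
    simpa using Finset.sum_nonneg fun y _ => sq_nonneg ‖f (x - y)‖

lemma norm_toLp_sum_translate_sq_le {φ : 𝓢(V, ℂ)} {δ : ℝ} (hφ : ∀ x, φ x ≠ 0 → ‖x‖ < δ / 2)
    {S : Finset V} (hS : (S : Set V).Pairwise fun y y' => δ ≤ dist y y') {c : V → ℂ}
    (hc : ∀ y ∈ S, ‖c y‖ ≤ 1) :
    ‖(∑ y ∈ S, c y • φ.compSubConstCLM ℂ y).toLp 2‖ ^ 2 ≤ S.card * ‖φ.toLp 2‖ ^ 2 := by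
  have hsq : ∀ f : 𝓢(V, ℂ), Integrable fun x => ‖f x‖ ^ 2 := fun f =>
    (f.memLp 2 volume).integrable_norm_pow two_ne_zero
  have htranslate : ∀ y ∈ S, Integrable fun x => ‖φ (x - y)‖ ^ 2 :=
    fun y _ => (hsq φ).comp_sub_right y
  rw [norm_toLp_two_sq, norm_toLp_two_sq]
  calc ∫ x, ‖(∑ y ∈ S, c y • φ.compSubConstCLM ℂ y) x‖ ^ 2 ≤ ∫ x, ∑ y ∈ S, ‖φ (x - y)‖ ^ 2 := by
        refine integral_mono (hsq _) (integrable_finsetSum _ htranslate) fun x => ?_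
        simpa using norm_sum_mul_comp_sub_sq_le hφ hS hc x
    _ = ∑ y ∈ S, ∫ x, ‖φ x‖ ^ 2 := by
        rw [integral_finsetSum _ htranslate]
        exact Finset.sum_congr rfl fun y _ => integral_sub_right_eq_self (fun x => ‖φ x‖ ^ 2) y
    _ = S.card * ∫ x, ‖φ x‖ ^ 2 := by rw [Finset.sum_const, nsmul_eq_mul]

end SchwartzL2

namespace Admissible

variable {d : ℕ} [NeZero d] {ψ₀ : Ed d → ℂ} (hψ : Admissible d ψ₀)
include hψ

/-- `F_{y,r}` as an element of `L²`, for `e = (y, r)`. -/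
def kernelLp (e : Ed d × ℝ) : Lp ℂ 2 (volume : Measure (Ed d)) := (hψ.kernel e).toLp 2

lemma sum_smul_kernelLp_eq_toLp {ι : Type*} (s : Finset ι) (c : ι → ℂ) (e : ι → Ed d × ℝ) :
    ∑ i ∈ s, c i • hψ.kernelLp (e i) = (∑ i ∈ s, c i • hψ.kernel (e i)).toLp 2 := by
  rw [← SchwartzMap.toLpCLM_apply (𝕜 := ℂ), map_sum]
  simp only [map_smul, SchwartzMap.toLpCLM_apply, kernelLp]

lemma fourier_sum_smul_kernel (S : Finset (Ed d)) (c : Ed d → ℂ) (r : ℝ) (ξ : Ed d) :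
    𝓕 (∑ y ∈ S, c y • hψ.kernel (y, r)) ξ = sphereFourier d r ξ * 𝓕 ψ₀ ξ *
      𝓕 (∑ y ∈ S, c y • hψ.toSchwartzMap.compSubConstCLM ℂ y) ξ := by
  simp only [FourierTransform.fourier_sum, FourierTransform.fourier_smul, sum_apply, smul_apply,
    fourier_kernel, fourier_compSubConstCLM, Finset.mul_sum, smul_eq_mul]
  refine Finset.sum_congr rfl fun y _ => ?_
  rw [SchwartzMap.fourier_coe hψ.toSchwartzMap, coe_toSchwartzMap]
  ring

lemma exists_norm_sum_kernelLp_sq_le :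
    ∃ A, 0 < A ∧ ∀ r, 0 < r → ∀ S : Finset (Ed d),
      (S : Set (Ed d)).Pairwise (fun y y' => 1 ≤ dist y y') → ∀ c : Ed d → ℂ, (∀ y ∈ S, ‖c y‖ ≤ 1) →
      ‖∑ y ∈ S, c y • hψ.kernelLp (y, r)‖ ^ 2 ≤ A * r ^ (d - 1) * S.card := by
  obtain ⟨C, hC, hC_le⟩ := hψ.exists_norm_sphereFourier_mul_norm_fourier_le
  set φ := hψ.toSchwartzMap
  refine ⟨C ^ 2 * (‖φ.toLp 2‖ ^ 2 + 1), by positivity, fun r hr S hS c hc => ?_⟩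
  have hφ : ∀ x, φ x ≠ 0 → ‖x‖ < 1 / 2 := fun x hx => (hψ.2.1 x hx).trans_lt (by norm_num)
  have hplancherel : ‖(∑ y ∈ S, c y • hψ.kernel (y, r)).toLp 2‖ ≤
      C * r ^ (((d : ℝ) - 1) / 2) * ‖(∑ y ∈ S, c y • φ.compSubConstCLM ℂ y).toLp 2‖ := by
    refine norm_toLp_two_le_of_norm_fourier_le fun ξ => ?_
    rw [fourier_sum_smul_kernel, norm_mul, norm_mul]
    exact mul_le_mul_of_nonneg_right (hC_le r hr ξ) (norm_nonneg _)
  have hplancherel_sq := pow_le_pow_left₀ (norm_nonneg _) hplancherel 2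
  have htranslates := norm_toLp_sum_translate_sq_le (φ := φ) (δ := 1) hφ hS hc
  rw [sum_smul_kernelLp_eq_toLp, pow_pred_eq_rpow_mul_rpow d hr.le]
  rw [mul_pow] at hplancherel_sq
  generalize ‖(∑ y ∈ S, c y • φ.compSubConstCLM ℂ y).toLp 2‖ = G at hplancherel_sq htranslates
  calc _ ≤ (C * r ^ (((d : ℝ) - 1) / 2)) ^ 2 * G ^ 2 := hplancherel_sq
    _ ≤ (C * r ^ (((d : ℝ) - 1) / 2)) ^ 2 * (S.card * (‖φ.toLp 2‖ ^ 2 + 1)) := by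
        gcongr
        linarith [mul_add_one (S.card : ℝ) (‖φ.toLp 2‖ ^ 2), (Nat.cast_nonneg S.card : (0 : ℝ) ≤ _)]
    _ = _ := by ring

lemma inner_kernelLp_ne_zero {e e' : Ed d × ℝ} (h : inner ℂ (hψ.kernelLp e) (hψ.kernelLp e') ≠ 0) :
    |e.2 - e'.2| ≤ dist e.1 e'.1 + 1 ∧ dist e.1 e'.1 ≤ e.2 + e'.2 + 1 := by
  rw [kernelLp, kernelLp, SchwartzMap.inner_toL2_toL2_eq _ _ volume] at h
  obtain ⟨x, hx⟩ := exists_ne_zero_of_integral_ne_zero h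
  have hx₁ : hψ.kernel e x ≠ 0 := fun h₀ => hx (by rw [h₀, inner_zero_left])
  have hx₂ : hψ.kernel e' x ≠ 0 := fun h₀ => hx (by rw [h₀, inner_zero_right])
  have hsupp := abs_le.1 (hψ.abs_norm_sub_sub_le_of_Fyr_ne_zero hx₁)
  have hsupp' := abs_le.1 (hψ.abs_norm_sub_sub_le_of_Fyr_ne_zero hx₂)
  have htri₁ := dist_triangle_left e.1 e'.1 x
  have htri₂ := dist_triangle x e.1 e'.1
  have htri₃ := dist_triangle_right x e.1 e'.1
  rw [dist_eq_norm x e.1, dist_eq_norm x e'.1] at htri₁ htri₂ htri₃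
  exact ⟨abs_le.2 ⟨by linarith [dist_comm e.1 e'.1], by linarith⟩, by linarith⟩

lemma inner_kernelLp_eq_fourier (e e' : Ed d × ℝ) :
    inner ℂ (hψ.kernelLp e) (hψ.kernelLp e') =
      𝓕 (fun ξ => conj (𝓕 (hψ.kernel (0, e.2)) ξ) * 𝓕 (hψ.kernel (0, e'.2)) ξ) (e'.1 - e.1) := by
  rw [kernelLp, kernelLp, SchwartzMap.inner_toL2_toL2_eq _ _ volume,
    ← SchwartzMap.integral_inner_fourier_fourier, Real.fourier_eq]
  congr with ξ
  have hphase : (𝐞 (-⟪ξ, e'.1 - e.1⟫) : ℂ) = 𝐞 (-⟪e'.1, ξ⟫) * 𝐞 ⟪e.1, ξ⟫ := by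
    rw [← Circle.coe_mul, ← AddChar.map_add_eq_mul, inner_sub_right, real_inner_comm,
      real_inner_comm e.1]
    ring_nf
  simp only [fourier_kernel, RCLike.inner_apply, Circle.smul_def, smul_eq_mul, map_mul,
    inner_zero_left]
  rw [← Circle.coe_inv_eq_conj, ← AddChar.map_neg_eq_inv, neg_neg, hphase]
  simp only [map_pow, neg_zero, AddChar.map_zero_eq_one, Circle.coe_one, map_one, one_mul]
  ring

lemma integrable_conj_fourier_kernel_mul (r r' : ℝ) :
    Integrable fun ξ => conj (𝓕 (hψ.kernel (0, r)) ξ) * 𝓕 (hψ.kernel (0, r')) ξ :=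
  (𝓕 (hψ.kernel (0, r'))).integrable.bdd_mul
    (Complex.continuous_conj.comp (𝓕 (hψ.kernel (0, r))).continuous).aestronglyMeasurable
    (.of_forall fun ξ => by
      simpa using SchwartzMap.norm_le_seminorm ℝ (𝓕 (hψ.kernel (0, r))) ξ)

lemma fourier_kernel_zero_eq_of_norm_eq {r : ℝ} {ξ η : Ed d} (h : ‖ξ‖ = ‖η‖) :
    𝓕 (hψ.kernel (0, r)) ξ = 𝓕 (hψ.kernel (0, r)) η := by
  simp only [fourier_kernel, inner_zero_left]
  rw [sphereFourier_eq_of_norm_eq h, fourier_eq_of_norm_eq hψ.2.2.1 h]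

lemma exists_norm_integral_conj_fourier_kernel_mul_sphereFourier_le :
    ∃ A, 0 < A ∧ ∀ r r' ρ, 0 < r → 0 < r' → 0 < ρ →
      ‖∫ ξ, conj (𝓕 (hψ.kernel (0, r)) ξ) * 𝓕 (hψ.kernel (0, r')) ξ * sphereFourier d ρ ξ‖ ≤
        A * (r * r' * ρ) ^ (((d : ℝ) - 1) / 2) := by
  obtain ⟨C, hC, hC_le⟩ := hψ.exists_norm_sphereFourier_mul_norm_fourier_le
  set a : ℝ := ((d : ℝ) - 1) / 2
  have hint : Integrable fun ξ => ‖𝓕 ψ₀ ξ‖ := (𝓕 hψ.toSchwartzMap).integrable.norm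
  refine ⟨C ^ 3 * ((∫ ξ, ‖𝓕 ψ₀ ξ‖) + 1), by positivity, fun r r' ρ hr hr' hρ => ?_⟩
  have hpointwise : ∀ ξ, ‖conj (𝓕 (hψ.kernel (0, r)) ξ) * 𝓕 (hψ.kernel (0, r')) ξ *
      sphereFourier d ρ ξ‖ ≤ C ^ 3 * (r * r' * ρ) ^ a * ‖𝓕 ψ₀ ξ‖ := by
    intro ξ
    calc _ = (‖sphereFourier d r ξ‖ * ‖𝓕 ψ₀ ξ‖) * (‖sphereFourier d r' ξ‖ * ‖𝓕 ψ₀ ξ‖) *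
          (‖sphereFourier d ρ ξ‖ * ‖𝓕 ψ₀ ξ‖) * ‖𝓕 ψ₀ ξ‖ := by
          simp only [fourier_kernel, norm_mul, RCLike.norm_conj, norm_pow, Circle.norm_coe]
          ring
      _ ≤ (C * r ^ a) * (C * r' ^ a) * (C * ρ ^ a) * ‖𝓕 ψ₀ ξ‖ := by
          gcongr ?_ * ?_ * ?_ * _
          exacts [hC_le r hr ξ, hC_le r' hr' ξ, hC_le ρ hρ ξ]
      _ = C ^ 3 * (r * r' * ρ) ^ a * ‖𝓕 ψ₀ ξ‖ := by
          rw [Real.mul_rpow (by positivity) hρ.le, Real.mul_rpow hr.le hr'.le]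
          ring
  refine (norm_integral_le_of_norm_le (hint.const_mul _) (.of_forall hpointwise)).trans ?_
  rw [integral_const_mul]
  linarith [(by positivity : 0 ≤ C ^ 3 * (r * r' * ρ) ^ a)]

lemma exists_norm_inner_kernelLp_le :
    ∃ A, 0 < A ∧ ∀ e e' : Ed d × ℝ, 0 < e.2 → 0 < e'.2 → e.1 ≠ e'.1 →
      ‖inner ℂ (hψ.kernelLp e) (hψ.kernelLp e')‖ ≤
        A * (e.2 * e'.2) ^ (((d : ℝ) - 1) / 2) * dist e.1 e'.1 ^ (-(((d : ℝ) - 1) / 2)) := by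
  obtain ⟨A, hA, hA_le⟩ := hψ.exists_norm_integral_conj_fourier_kernel_mul_sphereFourier_le
  have hm := sphereM_one_real_univ_pos (d := d)
  set m := (sphereM d 1).real univ with hm_def
  refine ⟨A / m, by positivity, fun e e' he he' hne => ?_⟩
  have hw : 0 < ‖e'.1 - e.1‖ := norm_pos_iff.2 (sub_ne_zero.2 hne.symm)
  have haverage := congrArg norm (sphereM_real_univ_mul_fourier
    (hψ.integrable_conj_fourier_kernel_mul e.2 e'.2) (fun ξ η h => by
      simp only [hψ.fourier_kernel_zero_eq_of_norm_eq h]) (e'.1 - e.1))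
  rw [← inner_kernelLp_eq_fourier, norm_mul, Complex.norm_real, Real.norm_of_nonneg (by positivity),
    sphereM_real_univ hw, ← hm_def, pow_pred_eq_rpow_mul_rpow d hw.le] at haverage
  have hbound := haverage.trans_le (hA_le e.2 e'.2 _ he he' hw)
  rw [Real.mul_rpow (by positivity) hw.le] at hbound
  rw [dist_eq_norm', Real.rpow_neg hw.le]
  set a : ℝ := ((d : ℝ) - 1) / 2
  have hwa : 0 < ‖e'.1 - e.1‖ ^ a := by positivity
  rw [div_mul_eq_mul_div, ← div_eq_mul_inv, div_div, le_div_iff₀ (by positivity)]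
  refine le_of_mul_le_mul_right ?_ hwa
  linarith

end Admissible

/-! ### Almost orthogonality and density -/

section OrthogonalBlocks

variable {ι κ : Type*} [DecidableEq κ] {S : Finset ι} {T : Finset κ} {g : ι → κ}

lemma norm_sum_sq_le_card_mul_sum_fiberwise {F : Type*} [SeminormedAddCommGroup F]
    (hg : ∀ i ∈ S, g i ∈ T) (v : ι → F) :
    ‖∑ i ∈ S, v i‖ ^ 2 ≤ T.card * ∑ t ∈ T, ‖∑ i ∈ S with g i = t, v i‖ ^ 2 := by
  rw [← Finset.sum_fiberwise_of_maps_to hg]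
  calc _ ≤ (∑ t ∈ T, ‖∑ i ∈ S with g i = t, v i‖) ^ 2 := by
        gcongr
        exact norm_sum_le _ _
    _ ≤ _ := sq_sum_le_card_mul_sum_sq

lemma norm_sum_sq_le_sum_fiberwise_add {𝕜 H : Type*} [RCLike 𝕜] [SeminormedAddCommGroup H]
    [InnerProductSpace 𝕜 H] (hg : ∀ i ∈ S, g i ∈ T) (v : ι → H) :
    ‖∑ i ∈ S, v i‖ ^ 2 ≤ ∑ t ∈ T, ‖∑ i ∈ S with g i = t, v i‖ ^ 2 +
      ∑ i ∈ S, ∑ j ∈ S with g j ≠ g i, ‖inner 𝕜 (v i) (v j)‖ := by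
  have hsq : ∀ U : Finset ι,
      ‖∑ i ∈ U, v i‖ ^ 2 = ∑ i ∈ U, ∑ j ∈ U, RCLike.re (inner 𝕜 (v i) (v j)) := fun U => by
    rw [← inner_self_eq_norm_sq (𝕜 := 𝕜)]
    simp only [sum_inner, inner_sum, map_sum]
    exact Finset.sum_comm
  have hdiag : ∑ t ∈ T, ‖∑ i ∈ S with g i = t, v i‖ ^ 2 =
      ∑ i ∈ S, ∑ j ∈ S with g j = g i, RCLike.re (inner 𝕜 (v i) (v j)) := by
    rw [← Finset.sum_fiberwise_of_maps_to hg]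
    refine Finset.sum_congr rfl fun t _ => (hsq _).trans (Finset.sum_congr rfl fun i hi => ?_)
    rw [(Finset.mem_filter.1 hi).2]
  rw [hsq, hdiag, ← Finset.sum_add_distrib]
  refine Finset.sum_le_sum fun i _ => ?_
  rw [← Finset.sum_filter_add_sum_filter_not S fun j => g j = g i]
  gcongr
  exact RCLike.re_le_norm _

end OrthogonalBlocks

section DyadicSums

variable {ι : Type*} {S : Finset ι} {g : ι → ℝ} {K s b : ℝ}

/-- The constant in `sum_rpow_le_of_dyadic_card_le`. -/
def dyadicConst (s b : ℝ) : ℝ := 2 ^ |s| * (1 - 2 ^ (-b))⁻¹ * 2 ^ b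

lemma dyadicConst_pos (s : ℝ) (hb : 0 < b) : 0 < dyadicConst s b := by
  have hratio : (2 : ℝ) ^ (-b) < 1 :=
    Real.rpow_lt_one_of_one_lt_of_neg one_lt_two (neg_lt_zero.2 hb)
  have := sub_pos.2 hratio
  rw [dyadicConst]
  positivity

lemma rpow_le_two_rpow_abs_mul_rpow {x y : ℝ} (hx : 0 < x) (hxy : x ≤ y) (hyx : y ≤ 2 * x) :
    y ^ s ≤ 2 ^ |s| * x ^ s := by
  rcases le_total 0 s with hs | hs
  · rw [abs_of_nonneg hs, ← Real.mul_rpow zero_le_two hx.le]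
    exact Real.rpow_le_rpow (hx.le.trans hxy) hyx hs
  · exact (Real.rpow_le_rpow_of_nonpos hx hxy hs).trans
      (le_mul_of_one_le_left (by positivity) (Real.one_le_rpow one_le_two (abs_nonneg s)))

lemma sum_rpow_le_of_card_le {x : ℝ} (hx : 0 < x) (hg : ∀ i ∈ S, x ≤ g i ∧ g i < 2 * x)
    (hcard : (S.card : ℝ) ≤ K * x ^ (-s - b)) : ∑ i ∈ S, g i ^ s ≤ 2 ^ |s| * K * x ^ (-b) := by
  calc ∑ i ∈ S, g i ^ s ≤ S.card • (2 ^ |s| * x ^ s) :=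
        Finset.sum_le_card_nsmul _ _ _ fun i hi =>
          rpow_le_two_rpow_abs_mul_rpow hx (hg i hi).1 (hg i hi).2.le
    _ ≤ K * x ^ (-s - b) * (2 ^ |s| * x ^ s) := by
        rw [nsmul_eq_mul]
        gcongr
    _ = 2 ^ |s| * K * (x ^ (-s - b) * x ^ s) := by ring
    _ = _ := by
        rw [← Real.rpow_add hx]
        ring_nf

lemma sum_Ico_two_rpow_pow_le {t : ℝ} (hb : 0 < b) (ht : 0 < t) {m : ℕ} (htm : t ≤ 2 * 2 ^ m)
    (M : ℕ) : ∑ l ∈ Finset.Ico m M, ((2 : ℝ) ^ (-b)) ^ l ≤ (1 - 2 ^ (-b))⁻¹ * 2 ^ b * t ^ (-b) := by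
  have hratio : (2 : ℝ) ^ (-b) < 1 :=
    Real.rpow_lt_one_of_one_lt_of_neg one_lt_two (neg_lt_zero.2 hb)
  calc ∑ l ∈ Finset.Ico m M, ((2 : ℝ) ^ (-b)) ^ l ≤ (2 ^ (-b)) ^ m / (1 - 2 ^ (-b)) :=
        geom_sum_Ico_le_of_lt_one (by positivity) hratio
    _ ≤ (t / 2) ^ (-b) / (1 - 2 ^ (-b)) := by
        rw [Real.rpow_pow_comm zero_le_two]
        gcongr ?_ / _
        exact Real.rpow_le_rpow_of_nonpos (by positivity) (by linarith) (neg_nonpos.2 hb.le)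
    _ = _ := by
        rw [Real.div_rpow ht.le zero_le_two, Real.rpow_neg zero_le_two, div_inv_eq_mul]
        ring

lemma sum_rpow_le_of_dyadic_card_le {t : ℝ} (hb : 0 < b) (hK : 0 ≤ K) (ht : 1 ≤ t)
    (hg : ∀ i ∈ S, t ≤ g i)
    (hcard : ∀ l : ℕ, ({i ∈ S | (2 : ℝ) ^ l ≤ g i ∧ g i < 2 * 2 ^ l}.card : ℝ) ≤
      K * ((2 : ℝ) ^ l) ^ (-s - b)) :
    ∑ i ∈ S, g i ^ s ≤ dyadicConst s b * K * t ^ (-b) := by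
  have hnear : ∀ x : ℝ, 1 ≤ x → ∃ l : ℕ, (2 : ℝ) ^ l ≤ x ∧ x < 2 * 2 ^ l := fun x hx => by
    simpa only [pow_succ'] using exists_nat_pow_near hx one_lt_two
  choose! level hlevel using hnear
  have hlevel_mono : ∀ i ∈ S, level t ≤ level (g i) := fun i hi => by
    have hlt : (2 : ℝ) ^ level t < 2 ^ (level (g i) + 1) := by
      rw [pow_succ']
      exact (hlevel t ht).1.trans_lt ((hg i hi).trans_lt (hlevel _ (ht.trans (hg i hi))).2)
    exact Nat.lt_succ_iff.1 ((pow_lt_pow_iff_right₀ one_lt_two).1 hlt)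
  set M := S.sup (level ∘ g) + 1
  have hmaps : ∀ i ∈ S, level (g i) ∈ Finset.Ico (level t) M := fun i hi =>
    Finset.mem_Ico.2 ⟨hlevel_mono i hi, Nat.lt_succ_of_le (Finset.le_sup (f := level ∘ g) hi)⟩
  have hlevel_sum : ∀ l, ∑ i ∈ S with level (g i) = l, g i ^ s ≤ 2 ^ |s| * K * (2 ^ (-b)) ^ l := by
    intro l
    have hmem : ∀ i ∈ S, level (g i) = l → (2 : ℝ) ^ l ≤ g i ∧ g i < 2 * 2 ^ l := fun i hi h =>
      h ▸ hlevel _ (ht.trans (hg i hi))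
    rw [Real.rpow_pow_comm zero_le_two]
    refine sum_rpow_le_of_card_le (by positivity)
      (fun i hi => hmem i (Finset.mem_filter.1 hi).1 (Finset.mem_filter.1 hi).2)
      (le_trans ?_ (hcard l))
    gcongr with i hi
    exact hmem i hi
  calc ∑ i ∈ S, g i ^ s = ∑ l ∈ Finset.Ico (level t) M, ∑ i ∈ S with level (g i) = l, g i ^ s :=
        (Finset.sum_fiberwise_of_maps_to hmaps _).symm
    _ ≤ 2 ^ |s| * K * ∑ l ∈ Finset.Ico (level t) M, (2 ^ (-b)) ^ l := by
        rw [Finset.mul_sum]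
        exact Finset.sum_le_sum fun l _ => hlevel_sum l
    _ ≤ 2 ^ |s| * K * ((1 - 2 ^ (-b))⁻¹ * 2 ^ b * t ^ (-b)) := by
        gcongr
        exact sum_Ico_two_rpow_pow_le hb (by positivity) (hlevel t ht).2.le M
    _ = _ := by
        rw [dyadicConst]
        ring

end DyadicSums

section Annuli

variable {V : Type*} [NormedAddCommGroup V] [NormedSpace ℝ V] [FiniteDimensional ℝ V] [Nontrivial V]

lemma addHaar_annulus_le [MeasurableSpace V] [BorelSpace V] (μ : Measure V) [μ.IsAddHaarMeasure]
    (y : V) {r h : ℝ} (hr : 0 ≤ r) (hh : 0 ≤ h) :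
    μ {x | |dist x y - r| ≤ h} ≤
      ENNReal.ofReal (2 * finrank ℝ V * h * (r + h) ^ (finrank ℝ V - 1)) * μ (ball 0 1) := by
  set n := finrank ℝ V
  set s := max (r - h) 0
  have hs : 0 ≤ s := le_max_right _ _
  have hsr : s ≤ r + h := max_le (by linarith) (by linarith)
  have hsub : {x | |dist x y - r| ≤ h} ⊆ closedBall y (r + h) \ ball y s := fun x hx => by
    rw [mem_ofPred_eq, abs_le] at hx
    refine ⟨mem_closedBall.2 (by linarith), fun hlt => ?_⟩
    rcases lt_max_iff.1 (mem_ball.1 hlt) with hlt | hlt <;> linarith [dist_nonneg (x := x) (y := y)]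
  have hpow : (r + h) ^ n - s ^ n ≤ 2 * n * h * (r + h) ^ (n - 1) := by
    calc (r + h) ^ n - s ^ n ≤ (r + h - s) * n * (r + h) ^ (n - 1) := by
          have := (le_abs_self _).trans (abs_pow_sub_pow_le (r + h) s n)
          rwa [abs_of_nonneg (sub_nonneg.2 hsr), abs_of_nonneg hs, abs_of_nonneg (hs.trans hsr),
            max_eq_left hsr] at this
      _ ≤ (2 * h) * n * (r + h) ^ (n - 1) := by
          gcongr
          linarith [le_max_left (r - h) 0]
      _ = _ := by ring
  calc μ {x | |dist x y - r| ≤ h} ≤ μ (closedBall y (r + h) \ ball y s) := measure_mono hsub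
    _ = ENNReal.ofReal ((r + h) ^ n - s ^ n) * μ (ball 0 1) := by
        rw [measure_sdiff (ball_subset_closedBall.trans (closedBall_subset_closedBall hsr))
          measurableSet_ball.nullMeasurableSet measure_ball_lt_top.ne,
          Measure.addHaar_closedBall _ _ (by positivity), Measure.addHaar_ball _ _ hs,
          ← ENNReal.sub_mul fun _ _ => measure_ball_lt_top.ne, ENNReal.ofReal_sub _ (by positivity)]
    _ ≤ _ := by gcongr

lemma card_mul_le_of_pairwiseDisjoint_closedBall {Q : Finset (V × ℝ)} {y : V} {r s h k δ : ℝ}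
    (hr : 0 ≤ r) (hh : 0 ≤ h) (hk : 0 ≤ k) (hδ : 0 ≤ δ)
    (hQ : ∀ q ∈ Q, |dist q.1 y - r| ≤ h ∧ |q.2 - s| ≤ k)
    (hdisj : (Q : Set (V × ℝ)).PairwiseDisjoint fun q => closedBall q δ) :
    Q.card * (δ ^ finrank ℝ V * (2 * δ)) ≤
      2 * finrank ℝ V * (h + δ) * (r + (h + δ)) ^ (finrank ℝ V - 1) * (2 * (k + δ)) := by
  borelize V
  set n := finrank ℝ V
  set μ : Measure V := Measure.addHaar
  have hsub : ⋃ q ∈ Q, closedBall q δ ⊆ {x | |dist x y - r| ≤ h + δ} ×ˢ closedBall s (k + δ) := by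
    refine iUnion₂_subset fun q hq x hx => ?_
    rw [mem_closedBall, Prod.dist_eq, max_le_iff] at hx
    refine ⟨?_, (dist_triangle _ q.2 _).trans (by rw [Real.dist_eq q.2]; linarith [(hQ q hq).2])⟩
    have hdist : |dist x.1 y - dist q.1 y| ≤ δ := (abs_dist_sub_le _ _ _).trans hx.1
    exact (abs_sub_le _ (dist q.1 y) _).trans (by linarith [(hQ q hq).1])
  have hball : ∀ q : V × ℝ, μ.prod volume (closedBall q δ) =
      ENNReal.ofReal (δ ^ n * (2 * δ)) * μ (ball 0 1) := fun q => by
    rw [← Prod.mk.eta (p := q), ← closedBall_prod_same, Measure.prod_prod, Real.volume_closedBall,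
      Measure.addHaar_closedBall _ _ hδ, mul_right_comm, ← ENNReal.ofReal_mul (by positivity)]
  have hvol := measure_mono (μ := μ.prod volume) hsub
  rw [measure_biUnion_finset hdisj fun q _ => measurableSet_closedBall, Measure.prod_prod,
    Finset.sum_congr rfl fun q _ => hball q, Finset.sum_const, nsmul_eq_mul, ← mul_assoc,
    ← ENNReal.ofReal_natCast, ← ENNReal.ofReal_mul (by positivity), Real.volume_closedBall] at hvol
  replace hvol := hvol.trans (mul_le_mul_left (addHaar_annulus_le μ y hr (by positivity)) _)
  rw [mul_right_comm, ← ENNReal.ofReal_mul (by positivity),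
    ENNReal.mul_le_mul_iff_left (measure_ball_pos _ _ one_pos).ne' measure_ball_lt_top.ne] at hvol
  exact (ENNReal.ofReal_le_ofReal_iff (by positivity)).1 hvol

lemma card_mul_pow_le_of_annulus {Q : Finset (V × ℝ)} {y : V} {r t : ℝ} (ht : 1 ≤ t) (htr : t ≤ r)
    (hQ : ∀ q ∈ Q, (t ≤ q.2 ∧ q.2 < 2 * t) ∧ |dist q.1 y - r| ≤ q.2 + 1)
    (hdisj : (Q : Set (V × ℝ)).PairwiseDisjoint fun q => closedBall q (t / 8)) :
    Q.card * t ^ (finrank ℝ V - 1) ≤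
      64 * finrank ℝ V * 8 ^ finrank ℝ V * 5 ^ (finrank ℝ V - 1) * r ^ (finrank ℝ V - 1) := by
  have hQ' : ∀ q ∈ Q, |dist q.1 y - r| ≤ 3 * t ∧ |q.2 - t| ≤ t := fun q hq => by
    obtain ⟨⟨hle, hlt⟩, habs⟩ := hQ q hq
    exact ⟨by linarith, abs_le.2 ⟨by linarith, by linarith⟩⟩
  have hpack := card_mul_le_of_pairwiseDisjoint_closedBall (by linarith) (by positivity)
    (by positivity) (by positivity) hQ' hdisj
  have hr : 0 ≤ r := by linarith
  obtain ⟨m, hm⟩ := Nat.exists_eq_add_one_of_ne_zero (finrank_pos (R := ℝ) (M := V)).ne'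
  rw [hm, Nat.add_sub_cancel] at hpack ⊢
  have hpow : (r + (3 * t + t / 8)) ^ m ≤ 5 ^ m * r ^ m := by
    rw [← mul_pow]
    exact pow_le_pow_left₀ (by positivity) (by linarith) m
  refine le_of_mul_le_mul_right ?_ (show 0 < t ^ 2 / (4 * 8 ^ (m + 1)) by positivity)
  calc Q.card * t ^ m * (t ^ 2 / (4 * 8 ^ (m + 1)))
      = Q.card * ((t / 8) ^ (m + 1) * (2 * (t / 8))) := by rw [div_pow]; field_simp; ring
    _ ≤ 2 * (m + 1 : ℕ) * (3 * t + t / 8) * (r + (3 * t + t / 8)) ^ m * (2 * (t + t / 8)) := hpack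
    _ ≤ 2 * (m + 1 : ℕ) * (3 * t + t / 8) * (5 ^ m * r ^ m) * (2 * (t + t / 8)) := by gcongr
    _ = 225 / 16 * ((m + 1 : ℕ) * 5 ^ m * r ^ m * t ^ 2) := by ring
    _ ≤ 16 * ((m + 1 : ℕ) * 5 ^ m * r ^ m * t ^ 2) := by gcongr; norm_num
    _ = _ := by field_simp; ring

end Annuli

section Density

/-- The family `E` of centers and radii `(y, r)` has density at most `u` at the scales
`1/2 ≤ ρ ≤ r/2`, in the sup metric on the product. The factor `2` matches a family in which
`IsDenseAt E (2 * u)` fails at every point. -/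
def HasDensityLE {X : Type*} [PseudoMetricSpace X] (E : Finset (X × ℝ)) (u : ℝ) : Prop :=
  ∀ e ∈ E, ∀ ρ : ℝ, 1 / 2 ≤ ρ → ρ ≤ e.2 / 2 → ({e' ∈ E | dist e' e ≤ ρ}.card : ℝ) ≤ 2 * u * ρ

lemma HasDensityLE.exists_card_le_mul_card {X : Type*} [PseudoMetricSpace X] {E P : Finset (X × ℝ)}
    {u ρ : ℝ} (hE : HasDensityLE E u) (hPE : P ⊆ E) (hρ : 1 / 2 ≤ ρ) (hP : ∀ e ∈ P, ρ ≤ e.2 / 2) :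
    ∃ Q ⊆ P, (Q : Set (X × ℝ)).PairwiseDisjoint (fun q => closedBall q (ρ / 4)) ∧
      (P.card : ℝ) ≤ Q.card * (2 * u * ρ) := by
  classical
  obtain ⟨W, hWP, hdisj, hcover⟩ := Vitali.exists_disjoint_subfamily_covering_enlargement_closedBall
    (P : Set (X × ℝ)) id (fun _ => ρ / 4) (ρ / 4) (fun _ _ => le_rfl) 4 (by norm_num)
  have hWP' : ∀ e ∈ {e ∈ P | e ∈ W}, e ∈ W := fun e he => (Finset.mem_filter.1 he).2
  refine ⟨{e ∈ P | e ∈ W}, Finset.filter_subset _ _, hdisj.subset hWP', ?_⟩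
  have hsub : P ⊆ {e ∈ P | e ∈ W}.biUnion fun q => {e ∈ E | dist e q ≤ ρ} := fun p hp => by
    obtain ⟨q, hq, hpq⟩ := hcover p hp
    have hmem := mem_closedBall.1 (hpq (mem_closedBall_self (by linarith)))
    exact Finset.mem_biUnion.2 ⟨q, Finset.mem_filter.2 ⟨hWP hq, hq⟩,
      Finset.mem_filter.2 ⟨hPE hp, hmem.trans_eq (by ring)⟩⟩
  calc (P.card : ℝ) ≤ ∑ q ∈ P with q ∈ W, ({e ∈ E | dist e q ≤ ρ}.card : ℝ) := by
        exact_mod_cast (Finset.card_le_card hsub).trans Finset.card_biUnion_le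
    _ ≤ ∑ q ∈ P with q ∈ W, 2 * u * ρ := Finset.sum_le_sum fun q hq =>
        have hqP := (Finset.mem_filter.1 hq).1
        hE q (hPE hqP) ρ hρ (hP q hqP)
    _ = _ := by rw [Finset.sum_const, nsmul_eq_mul]

lemma HasDensityLE.sum_dist_rpow_le {X : Type*} [PseudoMetricSpace X] {E S : Finset (X × ℝ)}
    {u b t : ℝ} (hE : HasDensityLE E u) (hu : 0 ≤ u) (hb : 0 < b) (ht : 1 ≤ t) {e : X × ℝ}
    (he : e ∈ E) (hSE : S ⊆ E) (hS : ∀ e' ∈ S, t ≤ dist e.1 e'.1 ∧ dist e.1 e'.1 ≤ e.2 / 8 ∧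
      |e.2 - e'.2| ≤ dist e.1 e'.1 + 1) :
    ∑ e' ∈ S, dist e.1 e'.1 ^ (-(1 + b)) ≤ dyadicConst (-(1 + b)) b * (8 * u) * t ^ (-b) := by
  refine sum_rpow_le_of_dyadic_card_le hb (by positivity) ht (fun e' he' => (hS e' he').1)
    fun l => ?_
  rw [neg_neg, add_sub_cancel_right, Real.rpow_one]
  rcases Finset.eq_empty_or_nonempty
      {e' ∈ S | (2 : ℝ) ^ l ≤ dist e.1 e'.1 ∧ dist e.1 e'.1 < 2 * 2 ^ l} with hempty | ⟨e₀, he₀⟩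
  · rw [hempty, Finset.card_empty, Nat.cast_zero]
    positivity
  have hl : (1 : ℝ) ≤ 2 ^ l := one_le_pow₀ one_le_two
  obtain ⟨he₀S, hle, -⟩ := Finset.mem_filter.1 he₀
  have hscale : (2 : ℝ) ^ l ≤ e.2 / 8 := hle.trans (hS e₀ he₀S).2.1
  have hsub : {e' ∈ S | (2 : ℝ) ^ l ≤ dist e.1 e'.1 ∧ dist e.1 e'.1 < 2 * 2 ^ l} ⊆
      {e' ∈ E | dist e' e ≤ 4 * 2 ^ l} := fun e' he' => by
    obtain ⟨he'S, -, hlt⟩ := Finset.mem_filter.1 he'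
    refine Finset.mem_filter.2 ⟨hSE he'S, ?_⟩
    rw [dist_comm, Prod.dist_eq, Real.dist_eq]
    exact max_le (by linarith) (by linarith [(hS e' he'S).2.2])
  exact (Nat.cast_le.2 (Finset.card_le_card hsub)).trans
    ((hE e he (4 * 2 ^ l) (by linarith) (by linarith)).trans_eq (by ring))

variable {V : Type*} [NormedAddCommGroup V] [NormedSpace ℝ V] [FiniteDimensional ℝ V] [Nontrivial V]
  {E : Finset (V × ℝ)} {u : ℝ}

lemma HasDensityLE.card_annulus_le (hE : HasDensityLE E u) (hu : 0 ≤ u) (y : V) {r t : ℝ}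
    (ht : 1 ≤ t) (htr : t ≤ r) :
    ({e ∈ E | (t ≤ e.2 ∧ e.2 < 2 * t) ∧ |dist e.1 y - r| ≤ e.2 + 1}.card : ℝ) ≤
      64 * finrank ℝ V * 8 ^ finrank ℝ V * 5 ^ (finrank ℝ V - 1) * u * r ^ (finrank ℝ V - 1) *
        t ^ (2 - finrank ℝ V : ℝ) := by
  set P := {e ∈ E | (t ≤ e.2 ∧ e.2 < 2 * t) ∧ |dist e.1 y - r| ≤ e.2 + 1}
  have hP : ∀ e ∈ P, (t ≤ e.2 ∧ e.2 < 2 * t) ∧ |dist e.1 y - r| ≤ e.2 + 1 :=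
    fun e he => (Finset.mem_filter.1 he).2
  obtain ⟨Q, hQP, hdisj, hcard⟩ := hE.exists_card_le_mul_card (Finset.filter_subset _ _ : P ⊆ E)
    (by linarith : 1 / 2 ≤ t / 2) fun e he => by linarith [(hP e he).1.1]
  have hpack := card_mul_pow_le_of_annulus ht htr (fun q hq => hP q (hQP hq))
    (hdisj.mono_on fun q _ => closedBall_subset_closedBall (by linarith))
  set n := finrank ℝ V
  have hexp : t ^ (2 - n : ℝ) = t * (t ^ (n - 1))⁻¹ := by
    rw [show (2 - n : ℝ) = 1 - (n - 1 : ℕ) by rw [Nat.cast_pred finrank_pos]; ring,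
      Real.rpow_sub (by linarith), Real.rpow_one, Real.rpow_natCast, div_eq_mul_inv]
  calc (P.card : ℝ) ≤ Q.card * (2 * u * (t / 2)) := hcard
    _ = Q.card * t ^ (n - 1) * (u * (t * (t ^ (n - 1))⁻¹)) := by field_simp
    _ ≤ 64 * n * 8 ^ n * 5 ^ (n - 1) * r ^ (n - 1) * (u * (t * (t ^ (n - 1))⁻¹)) := by gcongr
    _ = _ := by rw [hexp]; ring

lemma HasDensityLE.exists_sum_rpow_le (s : ℝ) {b : ℝ} (hb : 0 < b) (hsb : s + b = finrank ℝ V - 2) :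
    ∃ C > 0, ∀ (E : Finset (V × ℝ)) (u : ℝ), HasDensityLE E u → 0 ≤ u →
      ∀ (y : V) (r t : ℝ), 0 ≤ r → 1 ≤ t → ∀ S ⊆ E,
        (∀ e ∈ S, t ≤ e.2 ∧ e.2 ≤ r ∧ |dist e.1 y - r| ≤ e.2 + 1) →
        ∑ e ∈ S, e.2 ^ s ≤ C * u * r ^ (finrank ℝ V - 1) * t ^ (-b) := by
  set n := finrank ℝ V
  have hn : 0 < n := finrank_pos
  refine ⟨dyadicConst s b * (64 * n * 8 ^ n * 5 ^ (n - 1)),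
    mul_pos (dyadicConst_pos s hb) (by positivity), fun E u hE hu y r t hr ht S hSE hS => ?_⟩
  refine (sum_rpow_le_of_dyadic_card_le (K := 64 * n * 8 ^ n * 5 ^ (n - 1) * u * r ^ (n - 1)) hb
    (by positivity) ht (fun e he => (hS e he).1) fun l => ?_).trans_eq (by ring)
  rcases Finset.eq_empty_or_nonempty {e ∈ S | (2 : ℝ) ^ l ≤ e.2 ∧ e.2 < 2 * 2 ^ l}
    with hempty | ⟨e₀, he₀⟩
  · rw [hempty, Finset.card_empty, Nat.cast_zero]
    positivity
  obtain ⟨he₀S, hle, -⟩ := Finset.mem_filter.1 he₀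
  have hsub : {e ∈ S | (2 : ℝ) ^ l ≤ e.2 ∧ e.2 < 2 * 2 ^ l} ⊆
      {e ∈ E | ((2 : ℝ) ^ l ≤ e.2 ∧ e.2 < 2 * 2 ^ l) ∧ |dist e.1 y - r| ≤ e.2 + 1} := fun e he => by
    obtain ⟨heS, hlevel⟩ := Finset.mem_filter.1 he
    exact Finset.mem_filter.2 ⟨hSE heS, hlevel, (hS e heS).2.2⟩
  rw [show -s - b = 2 - n by linarith]
  exact (Nat.cast_le.2 (Finset.card_le_card hsub)).trans
    (hE.card_annulus_le hu y (one_le_pow₀ one_le_two) (hle.trans (hS e₀ he₀S).2.1))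

end Density

section OffDiagonal

lemma mul_rpow_mul_rpow_neg_le_of_div_le {r r' x q a : ℝ} (hr : 0 < r) (hr' : 0 ≤ r') (hq : 0 < q)
    (ha : 0 ≤ a) (hx : r / q ≤ x) : (r * r') ^ a * x ^ (-a) ≤ q ^ a * r' ^ a :=
  calc (r * r') ^ a * x ^ (-a) ≤ (r * r') ^ a * (r / q) ^ (-a) := by
        gcongr ?_ * ?_
        exact Real.rpow_le_rpow_of_nonpos (by positivity) hx (neg_nonpos.2 ha)
    _ = q ^ a * r' ^ a := by
        have : 0 < r ^ a := by positivity
        rw [Real.mul_rpow hr.le hr', Real.rpow_neg (by positivity), Real.div_rpow hr.le hq.le]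
        field_simp

/-- The geometric constraints on a pair `e = (y, r)`, `e' = (y', r')` with `L ≤ r' ≤ r - L` for
which the spheres of radius `r` about `y` and of radius `r'` about `y'` come within distance `1` of
each other. -/
def IsInteracting {X : Type*} [PseudoMetricSpace X] (L : ℝ) (e e' : X × ℝ) : Prop :=
  L ≤ e'.2 ∧ e'.2 ≤ e.2 ∧ L ≤ |e.2 - e'.2| ∧ |e.2 - e'.2| ≤ dist e.1 e'.1 + 1 ∧
    dist e.1 e'.1 ≤ e.2 + e'.2 + 1

lemma HasDensityLE.sum_mul_rpow_mul_dist_rpow_le_of_near {X : Type*} [PseudoMetricSpace X]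
    {E S : Finset (X × ℝ)} {u b L : ℝ} (hE : HasDensityLE E u) (hu : 0 ≤ u) (hb : 0 < b)
    (hL : 2 ≤ L) {e : X × ℝ} (he : e ∈ E) (hr : 0 < e.2) (hSE : S ⊆ E)
    (hS : ∀ e' ∈ S, IsInteracting L e e' ∧ dist e.1 e'.1 ≤ e.2 / 8) :
    ∑ e' ∈ S, (e.2 * e'.2) ^ (1 + b) * dist e.1 e'.1 ^ (-(1 + b)) ≤
      dyadicConst (-(1 + b)) b * 8 * 2 ^ b * u * L ^ (-b) * (e.2 ^ (1 + b) * e.2 ^ (1 + b)) := by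
  have hsum := hE.sum_dist_rpow_le hu hb (by linarith : 1 ≤ L / 2) he hSE fun e' he' => by
    obtain ⟨⟨-, -, hgap, hrd, -⟩, hclose⟩ := hS e' he'
    exact ⟨by linarith, hclose, hrd⟩
  have hhalf : (L / 2) ^ (-b) = 2 ^ b * L ^ (-b) := by
    rw [Real.div_rpow (by linarith) zero_le_two, Real.rpow_neg zero_le_two, div_inv_eq_mul,
      mul_comm]
  rw [hhalf] at hsum
  refine le_trans ?_ ((mul_le_mul_of_nonneg_left hsum
    (by positivity : 0 ≤ (e.2 * e.2) ^ (1 + b))).trans_eq ?_)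
  · rw [Finset.mul_sum]
    refine Finset.sum_le_sum fun e' he' => ?_
    obtain ⟨⟨hLe, hle, -⟩, -⟩ := hS e' he'
    have : 0 ≤ e'.2 := by linarith
    gcongr
  · rw [Real.mul_rpow hr.le hr.le]
    ring

variable {V : Type*} [NormedAddCommGroup V] [NormedSpace ℝ V] [FiniteDimensional ℝ V]

lemma HasDensityLE.exists_sum_mul_rpow_mul_dist_rpow_le_of_far [Nontrivial V] {a b : ℝ}
    (ha : 0 ≤ a) (hb : 0 < b) (hab : a + b = finrank ℝ V - 2) :
    ∃ C > 0, ∀ (E : Finset (V × ℝ)) (u L : ℝ), HasDensityLE E u → 0 ≤ u → 1 ≤ L →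
      ∀ e : V × ℝ, 0 < e.2 →
      ∀ S ⊆ E, (∀ e' ∈ S, IsInteracting L e e' ∧ e.2 / 8 ≤ dist e.1 e'.1) →
        ∑ e' ∈ S, (e.2 * e'.2) ^ a * dist e.1 e'.1 ^ (-a) ≤
          C * u * L ^ (-b) * e.2 ^ (finrank ℝ V - 1) := by
  obtain ⟨C, hC, hfar⟩ := HasDensityLE.exists_sum_rpow_le (V := V) a hb hab
  refine ⟨8 ^ a * C, by positivity, fun E u L hE hu hL e hr S hSE hS => ?_⟩
  have hsum := hfar E u hE hu e.1 e.2 L hr.le hL S hSE fun e' he' => by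
    obtain ⟨⟨hLe, hle, -, hrd, hdr⟩, -⟩ := hS e' he'
    refine ⟨hLe, hle, ?_⟩
    rw [dist_comm]
    exact abs_le.2 ⟨by linarith [le_abs_self (e.2 - e'.2)], by linarith⟩
  refine le_trans ?_ ((mul_le_mul_of_nonneg_left hsum
    (by positivity : (0 : ℝ) ≤ 8 ^ a)).trans_eq (by ring))
  rw [Finset.mul_sum]
  exact Finset.sum_le_sum fun e' he' => mul_rpow_mul_rpow_neg_le_of_div_le hr
    (by linarith [(hS e' he').1.1]) (by norm_num) ha (hS e' he').2

lemma HasDensityLE.exists_sum_mul_rpow_mul_dist_rpow_le {a b : ℝ} (hn : 3 < finrank ℝ V)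
    (ha : a = (finrank ℝ V - 1) / 2) (hb : b = (finrank ℝ V - 3) / 2) :
    ∃ C > 0, ∀ (E : Finset (V × ℝ)) (u L : ℝ), HasDensityLE E u → 0 ≤ u → 2 ≤ L → ∀ e ∈ E,
      0 < e.2 → ∀ S ⊆ E, (∀ e' ∈ S, IsInteracting L e e') →
        ∑ e' ∈ S, (e.2 * e'.2) ^ a * dist e.1 e'.1 ^ (-a) ≤
          C * u * L ^ (-b) * e.2 ^ (finrank ℝ V - 1) := by
  have : Nontrivial V := nontrivial_of_finrank_pos (zero_lt_three.trans hn)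
  have : NeZero (finrank ℝ V) := ⟨by omega⟩
  have hn' : (3 : ℝ) < finrank ℝ V := by exact_mod_cast hn
  have hb₀ : 0 < b := by linarith
  have hab : a = 1 + b := by linarith
  obtain ⟨C, hC, hfar⟩ := HasDensityLE.exists_sum_mul_rpow_mul_dist_rpow_le_of_far (V := V) (a := a)
    (by linarith) hb₀ (by linarith)
  have hdyadic := dyadicConst_pos (-a) hb₀
  refine ⟨dyadicConst (-a) b * 8 * 2 ^ b + C, by positivity,
    fun E u L hE hu hL e he hr S hSE hS => ?_⟩
  have hsub (q : V × ℝ → Prop) [DecidablePred q] : {e' ∈ S | q e'} ⊆ E :=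
    (Finset.filter_subset _ _).trans hSE
  have hnear_sum := hE.sum_mul_rpow_mul_dist_rpow_le_of_near hu hb₀ hL he hr
    (hsub fun e' => dist e.1 e'.1 ≤ e.2 / 8) fun e' he' =>
      ⟨hS e' (Finset.mem_filter.1 he').1, (Finset.mem_filter.1 he').2⟩
  have hfar_sum := hfar E u L hE hu (by linarith) e hr _
    (hsub fun e' => ¬ dist e.1 e'.1 ≤ e.2 / 8) fun e' he' =>
      ⟨hS e' (Finset.mem_filter.1 he').1, (not_le.1 (Finset.mem_filter.1 he').2).le⟩
  rw [← hab, ha, ← pow_pred_eq_rpow_mul_rpow _ hr.le, ← ha] at hnear_sum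
  rw [← Finset.sum_filter_add_sum_filter_not S fun e' => dist e.1 e'.1 ≤ e.2 / 8]
  exact (add_le_add hnear_sum hfar_sum).trans_eq (by ring)

end OffDiagonal

namespace Admissible

variable {d : ℕ} {ψ₀ : Ed d → ℂ} (hψ : Admissible d ψ₀)
include hψ

lemma exists_sum_norm_inner_kernelLp_le_of_snd_le [NeZero d] (hd : 3 < d) :
    ∃ C > 0, ∀ (E : Finset (Ed d × ℝ)) (u L : ℝ), HasDensityLE E u → 0 ≤ u → 2 ≤ L → ∀ e ∈ E,
      0 < e.2 → ∑ e' ∈ E with L ≤ e'.2 ∧ e'.2 ≤ e.2 ∧ L ≤ |e.2 - e'.2|,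
        ‖inner ℂ (hψ.kernelLp e) (hψ.kernelLp e')‖ ≤
          C * u * L ^ (-(((d : ℝ) - 3) / 2)) * e.2 ^ (d - 1) := by
  have hfinrank := finrank_euclideanSpace_fin (𝕜 := ℝ) (n := d)
  obtain ⟨C, hC, hsum⟩ := HasDensityLE.exists_sum_mul_rpow_mul_dist_rpow_le (V := Ed d)
    (by rwa [hfinrank]) rfl rfl
  obtain ⟨A, hA, hA_le⟩ := hψ.exists_norm_inner_kernelLp_le
  refine ⟨A * C, by positivity, fun E u L hE hu hL e he hr => ?_⟩
  set N := {e' ∈ E | L ≤ e'.2 ∧ e'.2 ≤ e.2 ∧ L ≤ |e.2 - e'.2|}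
  rw [← Finset.sum_filter_ne_zero N]
  set S := {e' ∈ N | ‖inner ℂ (hψ.kernelLp e) (hψ.kernelLp e')‖ ≠ 0}
  have hS : ∀ e' ∈ S, e' ∈ E ∧ IsInteracting L e e' := fun e' he' => by
    obtain ⟨he'N, hne⟩ := Finset.mem_filter.1 he'
    obtain ⟨he'E, hLe, hle, hgap⟩ := Finset.mem_filter.1 he'N
    exact ⟨he'E, hLe, hle, hgap, hψ.inner_kernelLp_ne_zero (norm_ne_zero_iff.1 hne)⟩
  have hle := hsum E u L hE hu hL e he hr S (fun e' he' => (hS e' he').1)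
    fun e' he' => (hS e' he').2
  rw [hfinrank] at hle
  refine le_trans ?_ ((mul_le_mul_of_nonneg_left hle hA.le).trans_eq (by ring))
  rw [Finset.mul_sum]
  refine Finset.sum_le_sum fun e' he' => ?_
  obtain ⟨-, hLe, -, hgap, hdist, -⟩ := hS e' he'
  rw [← mul_assoc]
  exact hA_le e e' hr (by linarith) (dist_pos.1 (by linarith))

lemma exists_sum_norm_inner_kernelLp_le [NeZero d] (hd : 3 < d) :
    ∃ C > 0, ∀ (E : Finset (Ed d × ℝ)) (u L : ℝ), HasDensityLE E u → 0 ≤ u → 2 ≤ L →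
      (∀ e ∈ E, 0 < e.2) →
      ∑ e ∈ E, ∑ e' ∈ E with L ≤ e.2 ∧ L ≤ e'.2 ∧ L ≤ |e.2 - e'.2|,
        ‖inner ℂ (hψ.kernelLp e) (hψ.kernelLp e')‖ ≤
          C * u * L ^ (-(((d : ℝ) - 3) / 2)) * ∑ e ∈ E, e.2 ^ (d - 1) := by
  obtain ⟨C, hC, hC_le⟩ := hψ.exists_sum_norm_inner_kernelLp_le_of_snd_le hd
  refine ⟨2 * C, by positivity, fun E u L hE hu hL hpos => ?_⟩
  set k : Ed d × ℝ → Ed d × ℝ → ℝ := fun e e' => ‖inner ℂ (hψ.kernelLp e) (hψ.kernelLp e')‖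
  set f : Ed d × ℝ → Ed d × ℝ → ℝ := fun e e' =>
    if L ≤ e'.2 ∧ e'.2 ≤ e.2 ∧ L ≤ |e.2 - e'.2| then k e e' else 0
  have hf : ∀ e e', 0 ≤ f e e' := fun e e' => by
    simp only [f]
    split_ifs
    exacts [norm_nonneg _, le_rfl]
  have hsplit : ∀ e e', (if L ≤ e.2 ∧ L ≤ e'.2 ∧ L ≤ |e.2 - e'.2| then k e e' else 0) ≤
      f e e' + f e' e := fun e e' => by
    split_ifs with h
    · rcases le_total e'.2 e.2 with hle | hle
      · have : f e e' = k e e' := if_pos ⟨h.2.1, hle, h.2.2⟩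
        linarith [hf e' e]
      · have : f e' e = k e' e := if_pos ⟨h.1, hle, by rw [abs_sub_comm]; exact h.2.2⟩
        linarith [hf e e', norm_inner_symm (𝕜 := ℂ) (hψ.kernelLp e) (hψ.kernelLp e')]
    · exact add_nonneg (hf e e') (hf e' e)
  have hsum : ∑ e ∈ E, ∑ e' ∈ E, f e e' ≤
      C * u * L ^ (-(((d : ℝ) - 3) / 2)) * ∑ e ∈ E, e.2 ^ (d - 1) := by
    rw [Finset.mul_sum]
    refine Finset.sum_le_sum fun e he => ?_
    rw [← Finset.sum_filter]
    exact hC_le E u L hE hu hL e he (hpos e he)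
  calc _ ≤ ∑ e ∈ E, ∑ e' ∈ E, (f e e' + f e' e) := Finset.sum_le_sum fun e _ => by
        rw [Finset.sum_filter]
        exact Finset.sum_le_sum fun e' _ => hsplit e e'
    _ = 2 * ∑ e ∈ E, ∑ e' ∈ E, f e e' := by
        simp only [Finset.sum_add_distrib]
        rw [Finset.sum_comm (f := fun e e' => f e' e), two_mul]
    _ ≤ _ := (mul_le_mul_of_nonneg_left hsum zero_le_two).trans_eq (by ring)

end Admissible

section SeparatedFamilies

/-- A finite family of centers and radii `(y, r)` with `r ≥ 1` in which distinct centers, and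
distinct radii, are at distance at least `1`; both may repeat. -/
structure IsSeparatedFamily {X : Type*} [PseudoMetricSpace X] (E : Finset (X × ℝ)) : Prop where
  one_le_radius : ∀ e ∈ E, 1 ≤ e.2
  centers : (Prod.fst '' (E : Set (X × ℝ))).Pairwise fun y y' => 1 ≤ dist y y'
  radii : (Prod.snd '' (E : Set (X × ℝ))).Pairwise fun r r' => 1 ≤ dist r r'

variable {X : Type*} [PseudoMetricSpace X] {E S : Finset (X × ℝ)}

lemma IsSeparatedFamily.mono (hE : IsSeparatedFamily E) (hSE : S ⊆ E) : IsSeparatedFamily S where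
  one_le_radius e he := hE.one_le_radius e (hSE he)
  centers := hE.centers.mono (image_mono (Finset.coe_subset.2 hSE))
  radii := hE.radii.mono (image_mono (Finset.coe_subset.2 hSE))

lemma IsSeparatedFamily.of_subset_prod {Y : Set X} {R : Set ℝ}
    (hY : ∀ y ∈ Y, ∀ y' ∈ Y, y ≠ y' → 1 ≤ dist y y')
    (hR : ∀ r ∈ R, ∀ r' ∈ R, r ≠ r' → 1 ≤ |r - r'|) (hR₁ : ∀ r ∈ R, 1 ≤ r)
    (hE : (E : Set (X × ℝ)) ⊆ Y ×ˢ R) : IsSeparatedFamily E where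
  one_le_radius e he := hR₁ e.2 (hE he).2
  centers := Set.Pairwise.mono (image_subset_iff.2 fun _ he => (hE he).1)
    fun y hy y' hy' => hY y hy y' hy'
  radii := Set.Pairwise.mono (image_subset_iff.2 fun _ he => (hE he).2)
    fun r hr r' hr' hne => (hR r hr r' hr' hne).trans_eq (Real.dist_eq r r').symm

lemma HasDensityLE.mono {u : ℝ} (hE : HasDensityLE E u) (hSE : S ⊆ E) : HasDensityLE S u :=
  fun e he ρ hρ hρe =>
    (Nat.cast_le.2 (Finset.card_le_card (Finset.filter_subset_filter _ hSE))).trans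
      (hE e (hSE he) ρ hρ hρe)

lemma card_le_of_pairwise_one_le_dist {R : Finset ℝ} {x L : ℝ}
    (hR : (R : Set ℝ).Pairwise fun r r' => 1 ≤ dist r r') (hx : ∀ r ∈ R, x ≤ r ∧ r ≤ x + L)
    (hL : 0 ≤ L) : (R.card : ℝ) ≤ L + 2 := by
  have hcard : R.card ≤ (Finset.Icc ⌊x⌋ ⌊x + L⌋).card := by
    refine Finset.card_le_card_of_injOn (fun r => ⌊r⌋) (fun r hr => ?_) fun r hr r' hr' h => ?_
    · exact Finset.mem_coe.2
        (Finset.mem_Icc.2 ⟨Int.floor_mono (hx r hr).1, Int.floor_mono (hx r hr).2⟩)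
    · by_contra hne
      exact (hR hr hr' hne).not_gt (Int.abs_sub_lt_one_of_floor_eq_floor h)
  rw [Int.card_Icc] at hcard
  have hfloor : ⌊x⌋ ≤ ⌊x + L⌋ := Int.floor_mono (by linarith)
  have hcard' : (R.card : ℝ) ≤ ⌊x + L⌋ + 1 - ⌊x⌋ := by
    exact_mod_cast (by omega : (R.card : ℤ) ≤ ⌊x + L⌋ + 1 - ⌊x⌋)
  linarith [Int.floor_le (x + L), Int.lt_floor_add_one x]

/-- A coloring of the block indices: `0` is isolated, and blocks `m ≥ 1` are colored by parity, so
that distinct blocks of the same color are not adjacent. -/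
def blockColor (m : ℕ) : Fin 3 := if m = 0 then 0 else if m % 2 = 0 then 1 else 2

lemma pos_and_add_two_le_of_blockColor_eq {m m' : ℕ} (h : blockColor m = blockColor m')
    (hne : m ≠ m') :
    0 < m ∧ 0 < m' ∧ (m + 2 ≤ m' ∨ m' + 2 ≤ m) := by
  simp only [blockColor] at h
  split_ifs at h <;> omega

lemma mul_floor_div_le_and_le {x L : ℝ} (hL : 0 < L) (hx : 0 ≤ x) :
    ⌊x / L⌋₊ * L ≤ x ∧ x ≤ ⌊x / L⌋₊ * L + L := by
  have hle := Nat.floor_le (div_nonneg hx hL.le)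
  have hlt := Nat.lt_floor_add_one (x / L)
  rw [le_div_iff₀ hL] at hle
  rw [div_lt_iff₀ hL] at hlt
  exact ⟨hle, by linarith⟩

lemma le_and_le_sub_of_floor_div_add_two_le {x y L : ℝ} (hL : 0 < L) (hx : 0 < ⌊x / L⌋₊)
    (hxy : ⌊x / L⌋₊ + 2 ≤ ⌊y / L⌋₊) : L ≤ x ∧ L ≤ y - x := by
  have hx₁ : 1 ≤ x / L := by exact_mod_cast (Nat.le_floor_iff' one_ne_zero).1 hx
  have hy : ((⌊x / L⌋₊ + 2 : ℕ) : ℝ) ≤ y / L := (Nat.le_floor_iff' (by omega)).1 hxy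
  have hx₂ := Nat.lt_floor_add_one (x / L)
  push_cast at hy
  rw [le_div_iff₀ hL] at hx₁ hy
  rw [div_lt_iff₀ hL] at hx₂
  exact ⟨by linarith, by linarith⟩

lemma le_abs_sub_of_blockColor_eq {x y L : ℝ} (hL : 0 < L)
    (h : blockColor ⌊x / L⌋₊ = blockColor ⌊y / L⌋₊) (hne : ⌊x / L⌋₊ ≠ ⌊y / L⌋₊) :
    L ≤ x ∧ L ≤ y ∧ L ≤ |x - y| := by
  obtain ⟨hx, hy, hxy | hyx⟩ := pos_and_add_two_le_of_blockColor_eq h hne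
  · obtain ⟨hLx, hLxy⟩ := le_and_le_sub_of_floor_div_add_two_le hL hx hxy
    exact ⟨hLx, by linarith, by rw [abs_sub_comm]; exact hLxy.trans (le_abs_self _)⟩
  · obtain ⟨hLy, hLyx⟩ := le_and_le_sub_of_floor_div_add_two_le hL hy hyx
    exact ⟨by linarith, hLy, hLyx.trans (le_abs_self _)⟩

lemma mul_two_mul_rpow_neg_le {u s : ℝ} (hu : 1 ≤ u) (hs : 3 ≤ s) :
    u * (2 * u ^ (2 / (s - 1))) ^ (-((s - 3) / 2)) ≤ u ^ (2 / (s - 1)) := by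
  have hu₀ : 0 < u := by linarith
  have hs₁ : s - 1 ≠ 0 := by linarith
  have hU : 0 < u ^ (2 / (s - 1)) := Real.rpow_pos_of_pos hu₀ _
  calc u * (2 * u ^ (2 / (s - 1))) ^ (-((s - 3) / 2))
      ≤ u * (u ^ (2 / (s - 1))) ^ (-((s - 3) / 2)) := by
        gcongr u * ?_
        exact Real.rpow_le_rpow_of_nonpos hU (by linarith) (by linarith)
    _ = u ^ (1 + 2 / (s - 1) * -((s - 3) / 2)) := by
        rw [Real.rpow_add hu₀, Real.rpow_one, Real.rpow_mul hu₀.le]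
    _ = u ^ (2 / (s - 1)) := by
        congr 1
        field_simp
        ring

end SeparatedFamilies

namespace Admissible

variable {d : ℕ} [NeZero d] {ψ₀ : Ed d → ℂ} (hψ : Admissible d ψ₀)
include hψ

lemma exists_norm_sum_kernelLp_sq_le_of_snd_eq :
    ∃ A > 0, ∀ r > 0, ∀ S : Finset (Ed d × ℝ), IsSeparatedFamily S → (∀ e ∈ S, e.2 = r) →
      ∀ c : Ed d × ℝ → ℂ, (∀ e ∈ S, ‖c e‖ ≤ 1) →
        ‖∑ e ∈ S, c e • hψ.kernelLp e‖ ^ 2 ≤ A * ∑ e ∈ S, e.2 ^ (d - 1) := by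
  classical
  obtain ⟨A, hA, hA_le⟩ := hψ.exists_norm_sum_kernelLp_sq_le
  refine ⟨A, hA, fun r hr S hS hSr c hc => ?_⟩
  have hinj : InjOn Prod.fst (S : Set (Ed d × ℝ)) := fun e he e' he' h =>
    Prod.ext h ((hSr e he).trans (hSr e' he').symm)
  have hmk : ∀ e ∈ S, (e.1, r) = e := fun e he => by rw [← hSr e he]
  have hsum : ∑ e ∈ S, c e • hψ.kernelLp e =
      ∑ y ∈ S.image Prod.fst, c (y, r) • hψ.kernelLp (y, r) := by
    rw [Finset.sum_image hinj]
    exact Finset.sum_congr rfl fun e he => by rw [hmk e he]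
  have hmass : ∑ e ∈ S, e.2 ^ (d - 1) = r ^ (d - 1) * (S.image Prod.fst).card := by
    rw [Finset.card_image_of_injOn hinj, Finset.sum_congr rfl fun e he => by rw [hSr e he],
      Finset.sum_const, nsmul_eq_mul, mul_comm]
  rw [hsum, hmass, ← mul_assoc]
  refine hA_le r hr _ (by rw [Finset.coe_image]; exact hS.centers) _ fun y hy => ?_
  obtain ⟨e, he, rfl⟩ := Finset.mem_image.1 hy
  rw [hmk e he]
  exact hc e he

lemma exists_norm_sum_kernelLp_sq_le_of_snd_mem_Icc :
    ∃ A > 0, ∀ S : Finset (Ed d × ℝ), IsSeparatedFamily S →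
      ∀ x L : ℝ, 0 ≤ L → (∀ e ∈ S, x ≤ e.2 ∧ e.2 ≤ x + L) →
      ∀ c : Ed d × ℝ → ℂ, (∀ e ∈ S, ‖c e‖ ≤ 1) →
        ‖∑ e ∈ S, c e • hψ.kernelLp e‖ ^ 2 ≤ A * (L + 2) * ∑ e ∈ S, e.2 ^ (d - 1) := by
  classical
  obtain ⟨A, hA, hA_le⟩ := hψ.exists_norm_sum_kernelLp_sq_le_of_snd_eq
  refine ⟨A, hA, fun S hS x L hL hSx c hc => ?_⟩
  have hmaps : ∀ e ∈ S, e.2 ∈ S.image Prod.snd := fun e he => Finset.mem_image_of_mem _ he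
  have hcard : ((S.image Prod.snd).card : ℝ) ≤ L + 2 := by
    refine card_le_of_pairwise_one_le_dist (x := x) (by rw [Finset.coe_image]; exact hS.radii)
      (fun r hr => ?_) hL
    obtain ⟨e, he, rfl⟩ := Finset.mem_image.1 hr
    exact hSx e he
  calc ‖∑ e ∈ S, c e • hψ.kernelLp e‖ ^ 2 ≤ (S.image Prod.snd).card *
        ∑ r ∈ S.image Prod.snd, ‖∑ e ∈ S with e.2 = r, c e • hψ.kernelLp e‖ ^ 2 :=
        norm_sum_sq_le_card_mul_sum_fiberwise hmaps _
    _ ≤ (L + 2) * ∑ r ∈ S.image Prod.snd, A * ∑ e ∈ S with e.2 = r, e.2 ^ (d - 1) := by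
        gcongr with r hr
        obtain ⟨e, he, rfl⟩ := Finset.mem_image.1 hr
        exact hA_le e.2 (zero_lt_one.trans_le (hS.one_le_radius e he)) _
          (hS.mono (Finset.filter_subset _ _)) (fun e' he' => (Finset.mem_filter.1 he').2) c
          fun e' he' => hc e' (Finset.mem_filter.1 he').1
    _ = A * (L + 2) * ∑ e ∈ S, e.2 ^ (d - 1) := by
        rw [← Finset.mul_sum, Finset.sum_fiberwise_of_maps_to hmaps]
        ring

lemma exists_sum_floor_norm_sum_kernelLp_sq_le :
    ∃ A > 0, ∀ E : Finset (Ed d × ℝ), IsSeparatedFamily E → ∀ L > 0,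
      ∀ c : Ed d × ℝ → ℂ, (∀ e ∈ E, ‖c e‖ ≤ 1) →
        ∑ k ∈ E.image (fun e => ⌊e.2 / L⌋₊),
            ‖∑ e ∈ E with ⌊e.2 / L⌋₊ = k, c e • hψ.kernelLp e‖ ^ 2 ≤
          A * (L + 2) * ∑ e ∈ E, e.2 ^ (d - 1) := by
  obtain ⟨A, hA, hA_le⟩ := hψ.exists_norm_sum_kernelLp_sq_le_of_snd_mem_Icc
  refine ⟨A, hA, fun E hE L hL c hc => ?_⟩
  have hfib : ∑ k ∈ E.image (fun e => ⌊e.2 / L⌋₊), ∑ e ∈ E with ⌊e.2 / L⌋₊ = k, e.2 ^ (d - 1) =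
      ∑ e ∈ E, e.2 ^ (d - 1) :=
    Finset.sum_fiberwise_of_maps_to (fun e he => Finset.mem_image_of_mem _ he) _
  rw [← hfib, Finset.mul_sum]
  refine Finset.sum_le_sum fun k _ => hA_le _ (hE.mono (Finset.filter_subset _ _)) (k * L) L hL.le
    (fun e he => ?_) c fun e he => hc e (Finset.mem_filter.1 he).1
  obtain ⟨heE, rfl⟩ := Finset.mem_filter.1 he
  exact mul_floor_div_le_and_le hL (zero_le_one.trans (hE.one_le_radius e heE))

lemma exists_sum_norm_inner_smul_kernelLp_le_of_blockColor_eq (hd : 3 < d) :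
    ∃ B > 0, ∀ (E : Finset (Ed d × ℝ)) (u L : ℝ), HasDensityLE E u → 0 ≤ u → 2 ≤ L →
      (∀ e ∈ E, 0 < e.2) → ∀ i, (∀ e ∈ E, blockColor ⌊e.2 / L⌋₊ = i) →
      ∀ c : Ed d × ℝ → ℂ, (∀ e ∈ E, ‖c e‖ ≤ 1) →
        ∑ e ∈ E, ∑ e' ∈ E with ⌊e'.2 / L⌋₊ ≠ ⌊e.2 / L⌋₊,
            ‖inner ℂ (c e • hψ.kernelLp e) (c e' • hψ.kernelLp e')‖ ≤
          B * u * L ^ (-(((d : ℝ) - 3) / 2)) * ∑ e ∈ E, e.2 ^ (d - 1) := by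
  obtain ⟨B, hB, hB_le⟩ := hψ.exists_sum_norm_inner_kernelLp_le hd
  refine ⟨B, hB, fun E u L hEu hu hL hpos i hi c hc => ?_⟩
  refine (Finset.sum_le_sum fun e he => ?_).trans (hB_le E u L hEu hu hL hpos)
  refine (Finset.sum_le_sum fun e' he' => ?_).trans (Finset.sum_le_sum_of_subset_of_nonneg
    (fun e' he' => ?_) fun _ _ _ => norm_nonneg _)
  · rw [inner_smul_left, inner_smul_right, norm_mul, norm_mul, RCLike.norm_conj]
    refine (mul_le_of_le_one_left (by positivity) (hc e he)).trans ?_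
    exact mul_le_of_le_one_left (norm_nonneg _) (hc e' (Finset.mem_filter.1 he').1)
  · obtain ⟨he'E, hne⟩ := Finset.mem_filter.1 he'
    exact Finset.mem_filter.2 ⟨he'E, le_abs_sub_of_blockColor_eq (by linarith)
      ((hi e he).trans (hi e' he'E).symm) hne.symm⟩

lemma exists_norm_sum_kernelLp_sq_le_of_blockColor_eq (hd : 3 < d) :
    ∃ C > 0, ∀ (E : Finset (Ed d × ℝ)) (u L : ℝ), IsSeparatedFamily E → HasDensityLE E u →
      0 ≤ u → 2 ≤ L → ∀ i, (∀ e ∈ E, blockColor ⌊e.2 / L⌋₊ = i) →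
      ∀ c : Ed d × ℝ → ℂ, (∀ e ∈ E, ‖c e‖ ≤ 1) →
        ‖∑ e ∈ E, c e • hψ.kernelLp e‖ ^ 2 ≤
          C * (L + u * L ^ (-(((d : ℝ) - 3) / 2))) * ∑ e ∈ E, e.2 ^ (d - 1) := by
  obtain ⟨A, hA, hA_le⟩ := hψ.exists_sum_floor_norm_sum_kernelLp_sq_le
  obtain ⟨B, hB, hB_le⟩ := hψ.exists_sum_norm_inner_smul_kernelLp_le_of_blockColor_eq hd
  refine ⟨2 * A + B, by positivity, fun E u L hE hEu hu hL i hi c hc => ?_⟩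
  have hpos : ∀ e ∈ E, 0 < e.2 := fun e he => zero_lt_one.trans_le (hE.one_le_radius e he)
  have hM : 0 ≤ ∑ e ∈ E, e.2 ^ (d - 1) := Finset.sum_nonneg fun e he => pow_nonneg (hpos e he).le _
  have hL₀ : 0 < L := by linarith
  have huL : 0 ≤ u * L ^ (-(((d : ℝ) - 3) / 2)) := by positivity
  refine (norm_sum_sq_le_sum_fiberwise_add (𝕜 := ℂ)
    (fun e he => Finset.mem_image_of_mem (fun e => ⌊e.2 / L⌋₊) he) _).trans
    ((add_le_add (hA_le E hE L hL₀ c hc) (hB_le E u L hEu hu hL hpos i hi c hc)).trans ?_)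
  rw [mul_assoc B, ← add_mul]
  gcongr
  nlinarith

lemma exists_norm_sum_kernelLp_sq_le_of_hasDensityLE (hd : 3 < d) :
    ∃ C > 0, ∀ (E : Finset (Ed d × ℝ)) (u : ℝ), IsSeparatedFamily E → HasDensityLE E u → 1 ≤ u →
      ∀ c : Ed d × ℝ → ℂ, (∀ e ∈ E, ‖c e‖ ≤ 1) →
        ‖∑ e ∈ E, c e • hψ.kernelLp e‖ ^ 2 ≤
          C * u ^ (2 / ((d : ℝ) - 1)) * ∑ e ∈ E, e.2 ^ (d - 1) := by
  obtain ⟨C, hC, hC_le⟩ := hψ.exists_norm_sum_kernelLp_sq_le_of_blockColor_eq hd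
  have hd' : (3 : ℝ) < d := by exact_mod_cast hd
  refine ⟨9 * C, by positivity, fun E u hE hEu hu c hc => ?_⟩
  set U := u ^ (2 / ((d : ℝ) - 1))
  have hU : 1 ≤ U := Real.one_le_rpow hu (div_nonneg zero_le_two (by linarith))
  have hbalance := mul_two_mul_rpow_neg_le hu hd'.le
  set M := ∑ e ∈ E, e.2 ^ (d - 1)
  have hM : 0 ≤ M := Finset.sum_nonneg fun e he =>
    pow_nonneg (zero_le_one.trans (hE.one_le_radius e he)) _
  set color : Ed d × ℝ → Fin 3 := fun e => blockColor ⌊e.2 / (2 * U)⌋₊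
  calc ‖∑ e ∈ E, c e • hψ.kernelLp e‖ ^ 2
      ≤ (Finset.univ : Finset (Fin 3)).card *
          ∑ i, ‖∑ e ∈ E with color e = i, c e • hψ.kernelLp e‖ ^ 2 :=
        norm_sum_sq_le_card_mul_sum_fiberwise (fun _ _ => Finset.mem_univ _) _
    _ ≤ 3 * ∑ i, C * (2 * U + u * (2 * U) ^ (-(((d : ℝ) - 3) / 2))) *
          ∑ e ∈ E with color e = i, e.2 ^ (d - 1) := by
        rw [Finset.card_univ, Fintype.card_fin, Nat.cast_ofNat]
        gcongr with i
        have hsub := Finset.filter_subset (fun e => color e = i) E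
        exact hC_le _ u _ (hE.mono hsub) (hEu.mono hsub) (by linarith) (by linarith) i
          (fun e he => (Finset.mem_filter.1 he).2) c fun e he => hc e (hsub he)
    _ = 3 * C * (2 * U + u * (2 * U) ^ (-(((d : ℝ) - 3) / 2))) * M := by
        rw [← Finset.mul_sum, Finset.sum_fiberwise]
        ring
    _ ≤ 3 * C * (2 * U + U) * M := by gcongr
    _ = 9 * C * U * M := by ring

end Admissible

/-! ### From `L²` to `L^p` -/

section DenseBalls

/-- Some sup-metric ball around `e = (y, r)`, of radius `ρ` with `1/2 ≤ ρ ≤ r/2`, contains at least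
`u * ρ` points of `E`. -/
def IsDenseAt {X : Type*} [PseudoMetricSpace X] (E : Finset (X × ℝ)) (u : ℝ) (e : X × ℝ) : Prop :=
  ∃ ρ : ℝ, 1 / 2 ≤ ρ ∧ ρ ≤ e.2 / 2 ∧ u * ρ ≤ ({e' ∈ E | dist e' e ≤ ρ}.card : ℝ)

/-- The density level of `e` in `E`: the largest `n` such that `E` is dense at `e` with density
`2 ^ n`. -/
def densityLevel {X : Type*} [PseudoMetricSpace X] (E : Finset (X × ℝ)) (e : X × ℝ) : ℕ :=
  sSup {n : ℕ | IsDenseAt E (2 ^ n) e}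

variable {X : Type*} [PseudoMetricSpace X] {E : Finset (X × ℝ)} {e : X × ℝ}

lemma isDenseAt_one (he : e ∈ E) (h : 1 ≤ e.2) : IsDenseAt E 1 e := by
  refine ⟨1 / 2, le_rfl, by linarith, ?_⟩
  have hcard : 1 ≤ {e' ∈ E | dist e' e ≤ 1 / 2}.card :=
    Finset.card_pos.2 ⟨e, Finset.mem_filter.2 ⟨he, by rw [dist_self]; norm_num⟩⟩
  have : (1 : ℝ) ≤ {e' ∈ E | dist e' e ≤ 1 / 2}.card := by exact_mod_cast hcard
  linarith

lemma bddAbove_setOf_isDenseAt_two_pow (E : Finset (X × ℝ)) (e : X × ℝ) :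
    BddAbove {n : ℕ | IsDenseAt E (2 ^ n) e} := by
  refine ⟨2 * E.card, ?_⟩
  rintro n ⟨ρ, hρ, -, hcard⟩
  have hle : ({e' ∈ E | dist e' e ≤ ρ}.card : ℝ) ≤ E.card := by
    exact_mod_cast Finset.card_filter_le _ _
  have hpow : (2 : ℝ) ^ n * (1 / 2) ≤ E.card :=
    (mul_le_mul_of_nonneg_left hρ (by positivity)).trans (hcard.trans hle)
  have hpow' : 2 ^ n ≤ 2 * E.card := by
    exact_mod_cast (by linarith : (2 : ℝ) ^ n ≤ 2 * E.card)
  exact n.lt_two_pow_self.le.trans hpow'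

lemma isDenseAt_two_pow_densityLevel (he : e ∈ E) (h : 1 ≤ e.2) :
    IsDenseAt E (2 ^ densityLevel E e) e :=
  Nat.sSup_mem (s := {n : ℕ | IsDenseAt E (2 ^ n) e})
    ⟨0, by simpa using isDenseAt_one he h⟩ (bddAbove_setOf_isDenseAt_two_pow E e)

lemma hasDensityLE_filter_densityLevel_eq (E : Finset (X × ℝ)) (n : ℕ) :
    HasDensityLE {e ∈ E | densityLevel E e = n} (2 ^ n) := by
  intro e he ρ hρ hρe
  by_contra! hlt
  obtain ⟨-, rfl⟩ := Finset.mem_filter.1 he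
  refine Nat.not_succ_le_self (densityLevel E e)
    (le_csSup (bddAbove_setOf_isDenseAt_two_pow E e) ⟨ρ, hρ, hρe, ?_⟩)
  rw [Nat.succ_eq_add_one, pow_succ']
  exact hlt.le.trans (Nat.cast_le.2 (Finset.card_le_card
    (Finset.filter_subset_filter _ (Finset.filter_subset _ _))))

variable {V : Type*} [NormedAddCommGroup V] [NormedSpace ℝ V] [FiniteDimensional ℝ V] [Nontrivial V]
  [MeasurableSpace V] [BorelSpace V] (μ : Measure V) [μ.IsAddHaarMeasure]
  {F S : Finset (V × ℝ)} {u : ℝ}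

lemma addHaar_annulus_le_sum_pow_of_card_le {b : V × ℝ} {ρ : ℝ} (hu : 0 < u) (hρ : 0 ≤ ρ)
    (hρb : ρ ≤ b.2 / 2) (hcard : u * ρ ≤ ({e ∈ F | dist e b ≤ ρ}.card : ℝ)) :
    μ {x | |dist x b.1 - b.2| ≤ 9 * ρ} ≤
      ENNReal.ofReal (18 * finrank ℝ V * 12 ^ (finrank ℝ V - 1) * u⁻¹ *
        ∑ e ∈ F with dist e b ≤ ρ, e.2 ^ (finrank ℝ V - 1)) * μ (ball 0 1) := by
  refine (addHaar_annulus_le μ b.1 (by linarith) (by linarith)).trans ?_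
  gcongr ENNReal.ofReal ?_ * _
  set n := finrank ℝ V
  have hρ_le : ρ ≤ u⁻¹ * ({e ∈ F | dist e b ≤ ρ}.card : ℝ) := by
    rwa [inv_mul_eq_div, le_div_iff₀' hu]
  have hradius : ({e ∈ F | dist e b ≤ ρ}.card : ℝ) * b.2 ^ (n - 1) ≤
      2 ^ (n - 1) * ∑ e ∈ F with dist e b ≤ ρ, e.2 ^ (n - 1) := by
    rw [Finset.mul_sum, ← nsmul_eq_mul]
    refine Finset.card_nsmul_le_sum _ _ _ fun e he => ?_
    have hsnd := (le_max_right _ _).trans (Finset.mem_filter.1 he).2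
    rw [Real.dist_eq, abs_le] at hsnd
    rw [← mul_pow]
    exact pow_le_pow_left₀ (by linarith) (by linarith) _
  calc 2 * n * (9 * ρ) * (b.2 + 9 * ρ) ^ (n - 1)
      ≤ 2 * n * (9 * (u⁻¹ * ({e ∈ F | dist e b ≤ ρ}.card : ℝ))) * (6 * b.2) ^ (n - 1) := by
        have hb : 0 ≤ b.2 + 9 * ρ := by linarith
        gcongr
        linarith
    _ = 18 * n * 6 ^ (n - 1) * u⁻¹ * (({e ∈ F | dist e b ≤ ρ}.card : ℝ) * b.2 ^ (n - 1)) := by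
        rw [mul_pow]
        ring
    _ ≤ 18 * n * 6 ^ (n - 1) * u⁻¹ *
          (2 ^ (n - 1) * ∑ e ∈ F with dist e b ≤ ρ, e.2 ^ (n - 1)) := by gcongr
    _ = _ := by
        rw [show (12 : ℝ) = 6 * 2 by norm_num, mul_pow]
        ring

lemma abs_dist_sub_le_of_mem_closedBall {b e : X × ℝ} {x : X} {ρ : ℝ}
    (he : e ∈ closedBall b (4 * ρ)) (hx : |dist x e.1 - e.2| ≤ ρ) :
    |dist x b.1 - b.2| ≤ 9 * ρ := by
  obtain ⟨hfst, hsnd⟩ := max_le_iff.1 (mem_closedBall.1 he)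
  rw [Real.dist_eq] at hsnd
  have hcenter := abs_dist_sub_le e.1 b.1 x
  rw [dist_comm e.1 x, dist_comm b.1 x, abs_le] at hcenter
  rw [abs_le] at hx hsnd ⊢
  constructor <;> linarith

lemma exists_finset_pairwiseDisjoint_closedBall_covering {Y : Type*} [PseudoMetricSpace Y]
    (S : Finset Y) {ρ : Y → ℝ} (hρ : ∀ e ∈ S, 0 ≤ ρ e) :
    ∃ W ⊆ S, (W : Set Y).PairwiseDisjoint (fun b => closedBall b (ρ b)) ∧
      ∀ e ∈ S, ∃ b ∈ W, e ∈ closedBall b (4 * ρ b) := by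
  obtain ⟨w, hwS, hdisj, hcover⟩ :=
    Vitali.exists_disjoint_subfamily_covering_enlargement_closedBall (S : Set Y) id ρ (∑ e ∈ S, ρ e)
      (fun e he => Finset.single_le_sum hρ he) 4 (by norm_num)
  lift w to Finset Y using S.finite_toSet.subset hwS
  refine ⟨w, Finset.coe_subset.1 hwS, hdisj, fun e he => ?_⟩
  obtain ⟨b, hb, hsub⟩ := hcover e he
  exact ⟨b, hb, hsub (mem_closedBall_self (hρ e he))⟩

lemma addHaar_iUnion_annulus_le (hF : ∀ e ∈ F, 0 ≤ e.2) (hu : 0 < u)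
    (hS : ∀ e ∈ S, IsDenseAt F u e) :
    μ (⋃ e ∈ S, {x | |dist x e.1 - e.2| ≤ 1 / 2}) ≤
      ENNReal.ofReal (18 * finrank ℝ V * 12 ^ (finrank ℝ V - 1) * u⁻¹ *
        ∑ e ∈ F, e.2 ^ (finrank ℝ V - 1)) * μ (ball 0 1) := by
  classical
  choose! ρ hρ hρ_le hcard using hS
  have hρ₀ : ∀ e ∈ S, 0 ≤ ρ e := fun e he => by linarith [hρ e he]
  obtain ⟨W, hWS, hdisj, hcover⟩ := exists_finset_pairwiseDisjoint_closedBall_covering S hρ₀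
  set n := finrank ℝ V
  have hmass : ∑ b ∈ W, ∑ e ∈ F with dist e b ≤ ρ b, e.2 ^ (n - 1) ≤ ∑ e ∈ F, e.2 ^ (n - 1) := by
    have hdisj' : (W : Set (V × ℝ)).PairwiseDisjoint fun b => {e ∈ F | dist e b ≤ ρ b} :=
      fun a ha b hb hab => Finset.disjoint_left.2 fun e hea heb =>
        Set.disjoint_left.1 (hdisj ha hb hab) (Finset.mem_filter.1 hea).2
          (Finset.mem_filter.1 heb).2
    rw [← Finset.sum_biUnion hdisj']
    exact Finset.sum_le_sum_of_subset_of_nonneg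
      (Finset.biUnion_subset.2 fun b _ => Finset.filter_subset _ _)
      fun e he _ => pow_nonneg (hF e he) _
  have hsub : ⋃ e ∈ S, {x | |dist x e.1 - e.2| ≤ 1 / 2} ⊆
      ⋃ b ∈ W, {x | |dist x b.1 - b.2| ≤ 9 * ρ b} := by
    refine iUnion₂_subset fun e he x hx => ?_
    obtain ⟨b, hb, heb⟩ := hcover e he
    refine mem_iUnion₂.2 ⟨b, hb, abs_dist_sub_le_of_mem_closedBall heb (hx.trans (hρ b (hWS hb)))⟩
  calc μ (⋃ e ∈ S, {x | |dist x e.1 - e.2| ≤ 1 / 2})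
      ≤ ∑ b ∈ W, μ {x | |dist x b.1 - b.2| ≤ 9 * ρ b} :=
        (measure_mono hsub).trans (measure_biUnion_finset_le _ _)
    _ ≤ ∑ b ∈ W, ENNReal.ofReal (18 * n * 12 ^ (n - 1) * u⁻¹ *
          ∑ e ∈ F with dist e b ≤ ρ b, e.2 ^ (n - 1)) * μ (ball 0 1) :=
        Finset.sum_le_sum fun b hb => addHaar_annulus_le_sum_pow_of_card_le μ hu
          (hρ₀ b (hWS hb)) (hρ_le b (hWS hb)) (hcard b (hWS hb))
    _ = ENNReal.ofReal (18 * n * 12 ^ (n - 1) * u⁻¹ *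
          ∑ b ∈ W, ∑ e ∈ F with dist e b ≤ ρ b, e.2 ^ (n - 1)) * μ (ball 0 1) := by
        rw [← Finset.sum_mul, ← ENNReal.ofReal_sum_of_nonneg, ← Finset.mul_sum]
        exact fun b _ => mul_nonneg (by positivity)
          (Finset.sum_nonneg fun e he => pow_nonneg (hF e (Finset.mem_filter.1 he).1) _)
    _ ≤ _ := by gcongr

end DenseBalls

section LpBounds

lemma eLpNorm_le_mul_measure_rpow_of_support_subset {α F : Type*} [MeasurableSpace α]
    [NormedAddCommGroup F] {μ : Measure α} {f : α → F} {A : Set α} {p q : ℝ≥0∞} (hpq : p ≤ q)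
    (hf : AEStronglyMeasurable f μ) (hA : Function.support f ⊆ A) :
    eLpNorm f p μ ≤ eLpNorm f q μ * μ A ^ (1 / p.toReal - 1 / q.toReal) := by
  have h := eLpNorm_le_eLpNorm_mul_rpow_measure_univ hpq (hf.restrict (s := A))
  rwa [eLpNorm_restrict_eq_of_support_subset hA, eLpNorm_restrict_eq_of_support_subset hA,
    Measure.restrict_apply_univ] at h

lemma sqrt_mul_rpow_mul_rpow_eq {C u M v a s : ℝ} (hC : 0 ≤ C) (hu : 0 < u) (hM : 0 ≤ M)
    (hv : 0 ≤ v) (hs : 0 ≤ s) :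
    √(C * u ^ (2 * a) * M) * (v * u⁻¹ * M) ^ s =
      √C * v ^ s * u ^ (a - s) * M ^ (1 / 2 + s) := by
  have hu_sq : u ^ (2 * a) = (u ^ a) ^ 2 := by
    rw [← Real.rpow_mul_natCast hu.le, mul_comm, Nat.cast_ofNat]
  rw [Real.sqrt_mul (by positivity), Real.sqrt_mul hC, hu_sq, Real.sqrt_sq (by positivity),
    Real.mul_rpow (by positivity) hM, Real.mul_rpow hv (by positivity), Real.inv_rpow hu.le,
    Real.rpow_sub hu, Real.rpow_add_of_nonneg hM (by norm_num) hs, ← Real.sqrt_eq_rpow]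
  ring

lemma eLpNorm_sum_le_of_fiberwise_le_geometric {ι α F : Type*} [MeasurableSpace α]
    [NormedAddCommGroup F] {μ : Measure α} {p : ℝ≥0∞} (hp : 1 ≤ p) {E : Finset ι} {f : ι → α → F}
    (hf : ∀ i ∈ E, AEStronglyMeasurable (f i) μ) (ν : ι → ℕ) {B q : ℝ} (hB : 0 ≤ B) (hq : 0 ≤ q)
    (hq1 : q < 1)
    (h : ∀ n, eLpNorm (fun x => ∑ i ∈ E with ν i = n, f i x) p μ ≤ ENNReal.ofReal (B * q ^ n)) :
    eLpNorm (fun x => ∑ i ∈ E, f i x) p μ ≤ ENNReal.ofReal (B * (1 - q)⁻¹) := by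
  have hsplit : (fun x => ∑ i ∈ E, f i x) =
      ∑ n ∈ E.image ν, fun x => ∑ i ∈ E with ν i = n, f i x := by
    ext x
    rw [Finset.sum_apply]
    exact (Finset.sum_fiberwise_of_maps_to (fun i hi => Finset.mem_image_of_mem ν hi) _).symm
  have hmeas (n : ℕ) : AEStronglyMeasurable (fun x => ∑ i ∈ E with ν i = n, f i x) μ :=
    Finset.aestronglyMeasurable_fun_sum _ fun i hi => hf i (Finset.mem_filter.1 hi).1
  calc eLpNorm (fun x => ∑ i ∈ E, f i x) p μ
      ≤ ∑ n ∈ E.image ν, ENNReal.ofReal (B * q ^ n) := by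
        rw [hsplit]
        exact (eLpNorm_sum_le (fun n _ => hmeas n) hp).trans (Finset.sum_le_sum fun n _ => h n)
    _ = ENNReal.ofReal (B * ∑ n ∈ E.image ν, q ^ n) := by
        rw [← ENNReal.ofReal_sum_of_nonneg fun n _ => by positivity, ← Finset.mul_sum]
    _ ≤ ENNReal.ofReal (B * (1 - q)⁻¹) := by
        rw [← tsum_geometric_of_lt_one hq hq1]
        gcongr
        exact (summable_geometric_of_lt_one hq hq1).sum_le_tsum _ fun n _ => pow_nonneg hq n

lemma half_add_inv_lt_inv_of_lt {s p : ℝ} (hs : 1 < s) (hp : 0 < p)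
    (h : p < (2 * s - 2) / (s + 1)) : 1 / 2 + 1 / (s - 1) < 1 / p := by
  have hs₁ : 0 < s - 1 := by linarith
  have hsum : 1 / 2 + 1 / (s - 1) = 1 / ((2 * s - 2) / (s + 1)) := by
    rw [show 2 * s - 2 = 2 * (s - 1) by ring]
    field_simp
    ring
  rw [hsum]
  exact one_div_lt_one_div_of_lt hp h

lemma ofReal_sum_pow_le_tsum_card {ι : Type*} {E : Finset ι} {r : ι → ℝ} (hr : ∀ i ∈ E, 1 ≤ r i)
    (n : ℕ) :
    ENNReal.ofReal (∑ i ∈ E, r i ^ n) ≤ ENNReal.ofReal (2 ^ n) * ∑' k : ℕ, 2 ^ (k * n) *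
      ((E.filter fun i => r i ∈ Set.Ico ((2 : ℝ) ^ k) ((2 : ℝ) ^ (k + 1))).card : ℝ≥0∞) := by
  have hcard : ∀ k : ℕ, (2 : ℝ≥0∞) ^ (k * n) *
      ((E.filter fun i => r i ∈ Set.Ico ((2 : ℝ) ^ k) ((2 : ℝ) ^ (k + 1))).card : ℝ≥0∞) =
      ∑ i ∈ E, if r i ∈ Set.Ico ((2 : ℝ) ^ k) ((2 : ℝ) ^ (k + 1)) then 2 ^ (k * n) else 0 :=
    fun k => by rw [← Finset.sum_filter, Finset.sum_const, nsmul_eq_mul, mul_comm]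
  rw [tsum_congr hcard, Summable.tsum_finsetSum fun _ _ => ENNReal.summable, Finset.mul_sum,
    ENNReal.ofReal_sum_of_nonneg fun i hi => pow_nonneg (zero_le_one.trans (hr i hi)) n]
  refine Finset.sum_le_sum fun i hi => ?_
  obtain ⟨k, hk_le, hk_lt⟩ := exists_nat_pow_near (hr i hi) one_lt_two
  calc ENNReal.ofReal (r i ^ n) ≤ ENNReal.ofReal (2 ^ n * 2 ^ (k * n)) := by
        rw [pow_mul, ← mul_pow, ← pow_succ']
        gcongr
        exact zero_le_one.trans (hr i hi)
    _ = ENNReal.ofReal (2 ^ n) *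
          if r i ∈ Set.Ico ((2 : ℝ) ^ k) ((2 : ℝ) ^ (k + 1)) then 2 ^ (k * n) else 0 := by
        rw [if_pos ⟨hk_le, hk_lt⟩, ENNReal.ofReal_mul (by positivity),
          ENNReal.ofReal_pow zero_le_two (k * n), ENNReal.ofReal_ofNat]
    _ ≤ _ := by
        gcongr
        exact ENNReal.le_tsum k

lemma exists_volume_iUnion_annulus_le (d : ℕ) [NeZero d] :
    ∃ v > 0, ∀ (E S : Finset (Ed d × ℝ)) (u : ℝ), (∀ e ∈ E, 0 ≤ e.2) → 0 < u →
      (∀ e ∈ S, IsDenseAt E u e) →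
        volume (⋃ e ∈ S, {x | |dist x e.1 - e.2| ≤ 1 / 2}) ≤
          ENNReal.ofReal (v * u⁻¹ * ∑ e ∈ E, e.2 ^ (d - 1)) := by
  have hball := ENNReal.toReal_pos (measure_ball_pos volume (0 : Ed d) one_pos).ne'
    measure_ball_lt_top.ne
  have hd := NeZero.pos d
  refine ⟨18 * d * 12 ^ (d - 1) * (volume (ball (0 : Ed d) 1)).toReal, by positivity,
    fun E S u hE hu hS => (addHaar_iUnion_annulus_le volume hE hu hS).trans_eq ?_⟩
  have hM : 0 ≤ ∑ e ∈ E, e.2 ^ (d - 1) := Finset.sum_nonneg fun e he => pow_nonneg (hE e he) _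
  conv_lhs => rw [finrank_euclideanSpace_fin, ← ENNReal.ofReal_toReal measure_ball_lt_top.ne,
    ← ENNReal.ofReal_mul (by positivity)]
  ring_nf

end LpBounds

namespace Admissible

variable {d : ℕ} {ψ₀ : Ed d → ℂ} (hψ : Admissible d ψ₀)
include hψ

lemma support_sum_mul_Fyr_subset (S : Finset (Ed d × ℝ)) (c : Ed d × ℝ → ℂ) :
    (Function.support fun x => ∑ e ∈ S, c e * Fyr d ψ₀ e.1 e.2 x) ⊆
      ⋃ e ∈ S, {x | |dist x e.1 - e.2| ≤ 1 / 2} := by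
  intro x hx
  obtain ⟨e, he, hne⟩ := Finset.exists_ne_zero_of_sum_ne_zero hx
  have hdist := hψ.abs_norm_sub_sub_le_of_Fyr_ne_zero (right_ne_zero_of_mul hne)
  rw [← dist_eq_norm] at hdist
  exact mem_iUnion₂.2 ⟨e, he, hdist.trans (by norm_num)⟩

variable [NeZero d]

lemma continuous_sum_mul_Fyr (S : Finset (Ed d × ℝ)) (c : Ed d × ℝ → ℂ) :
    Continuous fun x => ∑ e ∈ S, c e * Fyr d ψ₀ e.1 e.2 x :=
  continuous_finsetSum _ fun e _ => (hψ.contDiff_Fyr e.1 e.2).continuous.const_mul (c e)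

lemma eLpNorm_two_sum_mul_Fyr (S : Finset (Ed d × ℝ)) (c : Ed d × ℝ → ℂ) :
    eLpNorm (fun x => ∑ e ∈ S, c e * Fyr d ψ₀ e.1 e.2 x) 2 volume =
      ENNReal.ofReal ‖∑ e ∈ S, c e • hψ.kernelLp e‖ := by
  have hcoe : ⇑(∑ e ∈ S, c e • hψ.kernel e) = fun x => ∑ e ∈ S, c e * Fyr d ψ₀ e.1 e.2 x := by
    ext x
    simp only [sum_apply, smul_apply, smul_eq_mul, coe_kernel]
  rw [hψ.sum_smul_kernelLp_eq_toLp S c fun e => e, SchwartzMap.norm_toLp,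
    ENNReal.ofReal_toReal (SchwartzMap.memLp _ 2 volume).2.ne, hcoe]

lemma exists_eLpNorm_sum_mul_Fyr_le_of_isDenseAt (hd : 3 < d) {p : ℝ} (hp : 0 < p) (hp2 : p ≤ 2) :
    ∃ C > 0, ∀ (E S : Finset (Ed d × ℝ)) (u : ℝ), IsSeparatedFamily E → S ⊆ E → 1 ≤ u →
      (∀ e ∈ S, IsDenseAt E u e) → HasDensityLE S u →
      ∀ c : Ed d × ℝ → ℂ, (∀ e ∈ S, ‖c e‖ ≤ 1) →
        eLpNorm (fun x => ∑ e ∈ S, c e * Fyr d ψ₀ e.1 e.2 x) (ENNReal.ofReal p) volume ≤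
          ENNReal.ofReal (C * u ^ (1 / 2 + 1 / ((d : ℝ) - 1) - 1 / p) *
            (∑ e ∈ E, e.2 ^ (d - 1)) ^ (1 / p)) := by
  obtain ⟨C, hC, hC_le⟩ := hψ.exists_norm_sum_kernelLp_sq_le_of_hasDensityLE hd
  obtain ⟨v, hv, hv_le⟩ := exists_volume_iUnion_annulus_le d
  have hs : 0 ≤ 1 / p - 1 / 2 := sub_nonneg.2 (one_div_le_one_div_of_le hp hp2)
  refine ⟨√C * v ^ (1 / p - 1 / 2), by positivity, fun E S u hE hSE hu hdense hSu c hc => ?_⟩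
  set M := ∑ e ∈ E, e.2 ^ (d - 1)
  have hu₀ : 0 < u := by linarith
  have hpos : ∀ e ∈ E, 0 ≤ e.2 := fun e he => zero_le_one.trans (hE.one_le_radius e he)
  have hM : 0 ≤ M := Finset.sum_nonneg fun e he => pow_nonneg (hpos e he) _
  have hL2 : ‖∑ e ∈ S, c e • hψ.kernelLp e‖ ≤ √(C * u ^ (2 * (1 / ((d : ℝ) - 1))) * M) := by
    refine Real.le_sqrt_of_sq_le ((hC_le S u (hE.mono hSE) hSu hu c hc).trans ?_)
    rw [mul_one_div]
    gcongr
    exact Finset.sum_le_sum_of_subset_of_nonneg hSE fun e he _ => pow_nonneg (hpos e he) _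
  calc eLpNorm (fun x => ∑ e ∈ S, c e * Fyr d ψ₀ e.1 e.2 x) (ENNReal.ofReal p) volume
      ≤ ENNReal.ofReal ‖∑ e ∈ S, c e • hψ.kernelLp e‖ *
          volume (⋃ e ∈ S, {x | |dist x e.1 - e.2| ≤ 1 / 2}) ^ (1 / p - 1 / 2) := by
        have hholder := eLpNorm_le_mul_measure_rpow_of_support_subset (μ := volume)
          (ENNReal.ofReal_le_ofReal hp2) (hψ.continuous_sum_mul_Fyr S c).aestronglyMeasurable
          (hψ.support_sum_mul_Fyr_subset S c)
        rwa [ENNReal.toReal_ofReal hp.le, ENNReal.ofReal_ofNat, ENNReal.toReal_ofNat,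
          hψ.eLpNorm_two_sum_mul_Fyr] at hholder
    _ ≤ ENNReal.ofReal √(C * u ^ (2 * (1 / ((d : ℝ) - 1))) * M) *
          ENNReal.ofReal (v * u⁻¹ * M) ^ (1 / p - 1 / 2) := by
        gcongr
        exact hv_le E S u hpos hu₀ hdense
    _ = ENNReal.ofReal (√C * v ^ (1 / p - 1 / 2) * u ^ (1 / ((d : ℝ) - 1) - (1 / p - 1 / 2)) *
          M ^ (1 / 2 + (1 / p - 1 / 2))) := by
        rw [ENNReal.ofReal_rpow_of_nonneg (by positivity) hs,
          ← ENNReal.ofReal_mul (Real.sqrt_nonneg _),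
          sqrt_mul_rpow_mul_rpow_eq hC.le hu₀ hM hv.le hs]
    _ = _ := by ring_nf

lemma exists_eLpNorm_sum_mul_Fyr_le (hd : 3 < d) {p : ℝ} (hp1 : 1 ≤ p)
    (hpd : 1 / 2 + 1 / ((d : ℝ) - 1) < 1 / p) :
    ∃ C > 0, ∀ E : Finset (Ed d × ℝ), IsSeparatedFamily E →
      ∀ c : Ed d × ℝ → ℂ, (∀ e ∈ E, ‖c e‖ ≤ 1) →
        eLpNorm (fun x => ∑ e ∈ E, c e * Fyr d ψ₀ e.1 e.2 x) (ENNReal.ofReal p) volume ≤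
          ENNReal.ofReal (C * (∑ e ∈ E, e.2 ^ (d - 1)) ^ (1 / p)) := by
  have hd' : (3 : ℝ) < d := by exact_mod_cast hd
  have hp2 : p ≤ 2 := by
    have : 0 < 1 / ((d : ℝ) - 1) := one_div_pos.2 (by linarith)
    exact (lt_of_one_div_lt_one_div (by linarith) (by linarith : 1 / 2 < 1 / p)).le
  obtain ⟨C, hC, hC_le⟩ :=
    hψ.exists_eLpNorm_sum_mul_Fyr_le_of_isDenseAt hd (zero_lt_one.trans_le hp1) hp2
  set q : ℝ := 2 ^ (1 / 2 + 1 / ((d : ℝ) - 1) - 1 / p)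
  have hq : 0 < q := Real.rpow_pos_of_pos two_pos _
  have hq1 : q < 1 := Real.rpow_lt_one_of_one_lt_of_neg one_lt_two (by linarith)
  refine ⟨C * (1 - q)⁻¹, mul_pos hC (inv_pos.2 (by linarith)), fun E hE c hc => ?_⟩
  have hM : 0 ≤ ∑ e ∈ E, e.2 ^ (d - 1) := Finset.sum_nonneg fun e he =>
    pow_nonneg (zero_le_one.trans (hE.one_le_radius e he)) _
  rw [mul_right_comm]
  refine eLpNorm_sum_le_of_fiberwise_le_geometric (ENNReal.one_le_ofReal.2 hp1)
    (fun e _ => ((hψ.contDiff_Fyr e.1 e.2).continuous.const_mul (c e)).aestronglyMeasurable)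
    (densityLevel E) (by positivity) hq.le hq1 fun n => ?_
  have hsub := Finset.filter_subset (fun e => densityLevel E e = n) E
  refine (hC_le E _ (2 ^ n) hE hsub (one_le_pow₀ one_le_two) (fun e he => ?_)
    (hasDensityLE_filter_densityLevel_eq E n) c fun e he => hc e (hsub he)).trans_eq ?_
  · obtain ⟨heE, rfl⟩ := Finset.mem_filter.1 he
    exact isDenseAt_two_pow_densityLevel heE (hE.one_le_radius e heE)
  · rw [← Real.rpow_pow_comm zero_le_two, mul_right_comm]

end Admissible

end

/-- the main inequality,
`‖∑ c(y,r) F_{y,r}‖_p^p ≲ ∑_k 2^{k(d-1)} #ℰ_k` for `1 < p < (2d-2)/(d+1)`. -/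
theorem main_inequality
    (d : ℕ) (hd : 4 ≤ d) (p : ℝ) (hp1 : 1 < p)
    (hpd : p < (2 * (d : ℝ) - 2) / ((d : ℝ) + 1))
    (ψ₀ : Ed d → ℂ) (hψ : Admissible d ψ₀) :
    ∃ C : ℝ, 0 < C ∧
      ∀ (Y : Set (Ed d)) (R : Set ℝ),
        (∀ y ∈ Y, ∀ y' ∈ Y, y ≠ y' → 1 ≤ dist y y') →
        (∀ r ∈ R, ∀ r' ∈ R, r ≠ r' → 1 ≤ |r - r'|) →
        (∀ r ∈ R, 1 ≤ r) →
        ∀ E : Finset (Ed d × ℝ), (↑E : Set (Ed d × ℝ)) ⊆ Y ×ˢ R →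
        ∀ c : Ed d × ℝ → ℂ, (∀ e ∈ E, ‖c e‖ ≤ 1) →
          eLpNorm (fun x => ∑ e ∈ E, c e * Fyr d ψ₀ e.1 e.2 x)
              (ENNReal.ofReal p) volume ^ p ≤
            ENNReal.ofReal C *
              ∑' k : ℕ, 2 ^ (k * (d - 1)) *
                ((E.filter
                    (fun e => e.2 ∈ Set.Ico ((2 : ℝ) ^ k) ((2 : ℝ) ^ (k + 1)))).card
                  : ℝ≥0∞) := by
  have : NeZero d := ⟨by lia⟩
  have hp : 0 < p := by linarith
  have hd₁ : (1 : ℝ) < d := by exact_mod_cast (by lia : 1 < d)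
  obtain ⟨C, hC, hC_le⟩ :=
    hψ.exists_eLpNorm_sum_mul_Fyr_le hd hp1.le (half_add_inv_lt_inv_of_lt hd₁ hp hpd)
  refine ⟨C ^ p * 2 ^ (d - 1), by positivity, fun Y R hY hR hR₁ E hE c hc => ?_⟩
  have hsep : IsSeparatedFamily E := .of_subset_prod hY hR hR₁ hE
  have hM : 0 ≤ ∑ e ∈ E, e.2 ^ (d - 1) := Finset.sum_nonneg fun e he =>
    pow_nonneg (zero_le_one.trans (hsep.one_le_radius e he)) _
  calc _ ≤ ENNReal.ofReal (C * (∑ e ∈ E, e.2 ^ (d - 1)) ^ (1 / p)) ^ p := by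
        gcongr
        exact hC_le E hsep c hc
    _ = ENNReal.ofReal (C ^ p) * ENNReal.ofReal (∑ e ∈ E, e.2 ^ (d - 1)) := by
        rw [ENNReal.ofReal_rpow_of_nonneg (by positivity) hp.le,
          Real.mul_rpow hC.le (by positivity), ← Real.rpow_mul hM, one_div_mul_cancel hp.ne',
          Real.rpow_one, ENNReal.ofReal_mul (by positivity)]
    _ ≤ _ := by
        rw [ENNReal.ofReal_mul (by positivity), mul_assoc]
        gcongr
        exact ofReal_sum_pow_le_tsum_card hsep.one_le_radius (d - 1)
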